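/- Let f be a rational map of degree at least 2 whose Julia set J contains no critical points of f, and let x ∈ J satisfy χ̄(x) > 0. Then there exists a constant K > 0 (depending only on f) such that for every q ∈ [χ̲(x), χ̄(x)]\{0} there exist a number δ > 0 (depending on q but not on x) and a sequence n_k → ∞ such that: (i) lim_{k→∞} (1/n_k)·log|(f^{n_k})'(x)| = q, and (ii) the distortion of f^{n_k} on the pullback f_x^{-n_k}(B(f^{n_k}(x), δ)) is less than K, where f_x^{-n_k} is the inverse branch of f^{n_k} sending f^{n_k}(x) to x. -/

import Mathlib

open Filter Set Metric MeasureTheory Topology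
open scoped ENNReal NNReal

noncomputable section

/-! ### The Riemann sphere with the chordal (spherical) metric -/

/-- The Riemann sphere `ℂ ∪ {∞}`. -/
structure RSphere : Type where
  val : Option ℂ

namespace RSphere

/-- The inclusion of `ℂ` into the Riemann sphere. -/
def ofC (z : ℂ) : RSphere := ⟨some z⟩

/-- The point at infinity. -/
def infty : RSphere := ⟨none⟩

/-- Case elimination on a point of the Riemann sphere. -/
def elim {α : Sort*} (x : RSphere) (i : α) (h : ℂ → α) : α := Option.elim x.val i h

/-- Stereographic embedding of the Riemann sphere onto the round unit sphere in
`ℝ³ = ℂ ×₂ ℝ`.  It induces the chordal (spherical) metric on `RSphere`. -/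
def embed (x : RSphere) : WithLp 2 (ℂ × ℝ) :=
  elim x ((WithLp.equiv 2 (ℂ × ℝ)).symm (0, 1))
    fun z => (WithLp.equiv 2 (ℂ × ℝ)).symm
      (((2 / (‖z‖ ^ 2 + 1)) : ℝ) • z, (‖z‖ ^ 2 - 1) / (‖z‖ ^ 2 + 1))

/-- Inverse of the stereographic embedding. -/
def unembed (v : WithLp 2 (ℂ × ℝ)) : RSphere :=
  if (WithLp.equiv 2 (ℂ × ℝ) v).2 = 1 then infty
  else ofC ((1 - (WithLp.equiv 2 (ℂ × ℝ) v).2)⁻¹ • (WithLp.equiv 2 (ℂ × ℝ) v).1)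

lemma leftInverse_unembed : Function.LeftInverse unembed embed := by
  rintro ⟨x⟩
  cases x with
  | none =>
      simp [embed, unembed, elim, infty]
  | some z =>
      have h1 : (0 : ℝ) < ‖z‖ ^ 2 + 1 := by positivity
      have ht : (‖z‖ ^ 2 - 1) / (‖z‖ ^ 2 + 1) ≠ 1 := by
        intro h
        rw [div_eq_one_iff_eq h1.ne'] at h
        linarith
      simp only [embed, unembed, elim, Option.elim, Equiv.apply_symm_apply, ht, if_false, ofC]
      congr 2
      rw [smul_smul]
      have h2 : 1 - (‖z‖ ^ 2 - 1) / (‖z‖ ^ 2 + 1) = 2 / (‖z‖ ^ 2 + 1) := by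
        field_simp
        ring
      rw [h2]
      rw [inv_mul_cancel₀ (by positivity), one_smul]

lemma embed_injective : Function.Injective embed := leftInverse_unembed.injective

/-- The chordal metric on the Riemann sphere, induced by the stereographic embedding
onto the round unit sphere in Euclidean 3-space. -/
instance : MetricSpace RSphere := MetricSpace.induced embed embed_injective inferInstance

instance : MeasurableSpace RSphere := borel RSphere

instance : BorelSpace RSphere := ⟨rfl⟩

/-- Reading off a finite point (junk value `0` at `∞`). -/
def toC (x : RSphere) : ℂ := elim x 0 id

/-- The involution `z ↦ 1/z` of the Riemann sphere. -/
def inv (x : RSphere) : RSphere :=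
  elim x (ofC 0) fun z => if z = 0 then infty else ofC z⁻¹

end RSphere

/-! ### Basic dynamical notions -/

/-- The norm of the derivative of `g` at `x`, measured in the spherical metric
(for a rational map this is the usual norm of the spherical derivative). -/
def sphDeriv (g : RSphere → RSphere) (x : RSphere) : ℝ :=
  limsup (fun y => dist (g y) (g x) / dist y x) (𝓝[≠] x)

/-- The set of critical points. -/
def critSet (g : RSphere → RSphere) : Set RSphere := {x | sphDeriv g x = 0}

/-- The Fatou set: points having a neighbourhood on which the family of iterates is
equicontinuous (i.e. normal). -/
def fatouSet (f : RSphere → RSphere) : Set RSphere :=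
  {x | ∃ U : Set RSphere, IsOpen U ∧ x ∈ U ∧ EquicontinuousOn (fun n : ℕ => f^[n]) U}

/-- The Julia set. -/
def juliaSet (f : RSphere → RSphere) : Set RSphere := (fatouSet f)ᶜ

/-- `f` is the rational map on the Riemann sphere given by the coprime pair of
polynomials `p`, `q`. -/
structure IsRationalMap (f : RSphere → RSphere) (p q : Polynomial ℂ) : Prop where
  coprime : IsCoprime p q
  continuous : Continuous f
  eval : ∀ z : ℂ, q.eval z ≠ 0 → f (RSphere.ofC z) = RSphere.ofC (p.eval z / q.eval z)

/-- The degree of the rational map `p/q`. -/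
def ratDeg (p q : Polynomial ℂ) : ℕ := max p.natDegree q.natDegree

/-- The lower Lyapunov exponent `χ̲(x) = liminf (1/n) log |(fⁿ)'(x)|`, as an extended real. -/
def lyapLower (f : RSphere → RSphere) (x : RSphere) : EReal :=
  liminf (fun n : ℕ => ((Real.log (sphDeriv (f^[n]) x) / n : ℝ) : EReal)) atTop

/-- The upper Lyapunov exponent `χ̄(x) = limsup (1/n) log |(fⁿ)'(x)|`, as an extended real. -/
def lyapUpper (f : RSphere → RSphere) (x : RSphere) : EReal :=
  limsup (fun n : ℕ => ((Real.log (sphDeriv (f^[n]) x) / n : ℝ) : EReal)) atTop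

/-- The level set `𝓛(a,b)` of points of the Julia set with lower exponent `a` and
upper exponent `b`. -/
def levelSet (f : RSphere → RSphere) (a b : EReal) : Set RSphere :=
  {x | x ∈ juliaSet f ∧ lyapLower f x = a ∧ lyapUpper f x = b}

/-- The set `𝓛̂(α,β)` of points of the Julia set with `χ̲ ≤ β`, `χ̄ ≥ α` and `χ̄ > 0`. -/
def levelHat (f : RSphere → RSphere) (α β : ℝ) : Set RSphere :=
  {x | x ∈ juliaSet f ∧ lyapLower f x ≤ (β : EReal) ∧ (α : EReal) ≤ lyapUpper f x ∧
    0 < lyapUpper f x}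

/-- Birkhoff sum `S_m φ = φ + φ∘g + ⋯ + φ∘g^{m-1}`. -/
def birkhoff (g : RSphere → RSphere) (φ : RSphere → ℝ) (m : ℕ) (x : RSphere) : ℝ :=
  ∑ k ∈ Finset.range m, φ (g^[k] x)

/-- An `(m,ε)`-separated finite subset of `Λ` for the map `g`. -/
def IsSepSet (g : RSphere → RSphere) (Λ : Set RSphere) (m : ℕ) (ε : ℝ)
    (E : Finset RSphere) : Prop :=
  ↑E ⊆ Λ ∧ ∀ x ∈ E, ∀ y ∈ E, x ≠ y → ∃ k < m, ε ≤ dist (g^[k] x) (g^[k] y)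

/-- Topological pressure of the potential `φ` for `g` restricted to `Λ`,
defined à la Bowen via `(m,ε)`-separated sets. -/
def pressureOn (g : RSphere → RSphere) (Λ : Set RSphere) (φ : RSphere → ℝ) : ℝ :=
  ⨆ ε : {ε : ℝ // 0 < ε}, limsup (fun m : ℕ =>
    Real.log (⨆ E : {E : Finset RSphere // IsSepSet g Λ m ε.1 E},
      ∑ x ∈ E.1, Real.exp (birkhoff g φ m x)) / m) atTop

/-- `g` is uniformly expanding on `Λ`: `|(gᵐ)'(x)| ≥ c λᵐ` for some `c > 0`, `λ > 1`. -/
def ExpandingOn (g : RSphere → RSphere) (Λ : Set RSphere) : Prop :=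
  ∃ c > (0 : ℝ), ∃ l : ℝ, 1 < l ∧ ∀ x ∈ Λ, ∀ m : ℕ, 1 ≤ m → c * l ^ m ≤ sphDeriv (g^[m]) x

/-- `Λ` is a repeller for `g`: a compact invariant isolated set. -/
def IsRepeller (g : RSphere → RSphere) (Λ : Set RSphere) : Prop :=
  IsCompact Λ ∧ g '' Λ = Λ ∧
    ∃ U : Set RSphere, IsOpen U ∧ Λ ⊆ U ∧ ∀ x, (∀ m : ℕ, g^[m] x ∈ U) → x ∈ Λ

/-- Topological transitivity of `g` on `Λ`. -/
def TopTransOn (g : RSphere → RSphere) (Λ : Set RSphere) : Prop :=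
  ∀ U V : Set RSphere, IsOpen U → IsOpen V → (U ∩ Λ).Nonempty → (V ∩ Λ).Nonempty →
    ∃ m : ℕ, (g^[m] '' (U ∩ Λ) ∩ V).Nonempty

/-- The topological pressure of `φ` with respect to `f` on its Julia set, given by
the supremum of the pressures on compact invariant uniformly expanding subsets of `J`. -/
def pressureTop (f : RSphere → RSphere) (φ : RSphere → ℝ) : ℝ :=
  ⨆ L : {L : Set RSphere //
      L.Nonempty ∧ L ⊆ juliaSet f ∧ IsCompact L ∧ f '' L = L ∧ ExpandingOn f L},
    pressureOn f L.1 φ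

/-- The pressure function `d ↦ P(φ_d)` where `φ_d = -d log|f'|`. -/
def pressFamily (f : RSphere → RSphere) (d : ℝ) : ℝ :=
  pressureTop f fun x => -d * Real.log (sphDeriv f x)

/-- `F(α) = α⁻¹ inf_d (Q(d) + dα)` associated with a pressure function `Q` (for `α ≠ 0`). -/
def specF (Q : ℝ → ℝ) (α : ℝ) : EReal :=
  ((α⁻¹ : ℝ) : EReal) * ⨅ d : ℝ, ((Q d + d * α : ℝ) : EReal)

/-- `F(0) = lim_{α → 0⁺} F(α)`. -/
def specF0 (Q : ℝ → ℝ) : EReal := limsup (fun α : ℝ => specF Q α) (𝓝[>] (0 : ℝ))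

/-- The full spectrum function `F` associated with a pressure function `Q`. -/
def specFext (Q : ℝ → ℝ) (α : ℝ) : EReal := if α = 0 then specF0 Q else specF Q α

/-- The Lyapunov spectrum function `F` of `f`. -/
def Ffun (f : RSphere → RSphere) (α : ℝ) : EReal := specFext (pressFamily f) α

/-- `α⁻ = lim_{d → +∞} -Q(d)/d` for a pressure function `Q`. -/
def alphaMinusOf (Q : ℝ → ℝ) : ℝ := limsup (fun d : ℝ => -Q d / d) atTop

/-- `α⁺ = lim_{d → -∞} -Q(d)/d` for a pressure function `Q`. -/
def alphaPlusOf (Q : ℝ → ℝ) : ℝ := limsup (fun d : ℝ => -Q d / d) atBot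

/-- `α⁻` for the map `f`. -/
def alphaMinus (f : RSphere → RSphere) : ℝ := alphaMinusOf (pressFamily f)

/-- `α⁺` for the map `f`. -/
def alphaPlus (f : RSphere → RSphere) : ℝ := alphaPlusOf (pressFamily f)

/-- The Lyapunov exponent `χ(μ) = ∫ log|g'| dμ` of a measure. -/
def lyapMeas (g : RSphere → RSphere) (μ : Measure RSphere) : ℝ :=
  ∫ x, Real.log (sphDeriv g x) ∂μ

/-- `α⁻` as the infimum of Lyapunov exponents of invariant probability measures on `J`. -/
def alphaMinusMeas (f : RSphere → RSphere) : ℝ :=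
  sInf {r : ℝ | ∃ μ : Measure RSphere, IsProbabilityMeasure μ ∧ MeasurePreserving f μ μ ∧
    μ (juliaSet f)ᶜ = 0 ∧ r = lyapMeas f μ}

/-- `α⁺` as the supremum of Lyapunov exponents of invariant probability measures on `J`. -/
def alphaPlusMeas (f : RSphere → RSphere) : ℝ :=
  sSup {r : ℝ | ∃ μ : Measure RSphere, IsProbabilityMeasure μ ∧ MeasurePreserving f μ μ ∧
    μ (juliaSet f)ᶜ = 0 ∧ r = lyapMeas f μ}

/-- The maximal distortion `sup_{x,y ∈ Z} |g'(x)|/|g'(y)|` of `g` on `Z`. -/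
def distortionOn (g : RSphere → RSphere) (Z : Set RSphere) : ℝ :=
  sSup {r : ℝ | ∃ x ∈ Z, ∃ y ∈ Z, r = sphDeriv g x / sphDeriv g y}

/-- Conical points. -/
def IsConical (f : RSphere → RSphere) (x : RSphere) : Prop :=
  ∃ r : ℝ, 0 < r ∧ ∃ K : ℝ, ∃ n : ℕ → ℕ, StrictMono n ∧ ∃ U : ℕ → Set RSphere,
    ∀ i, U i ∈ 𝓝 x ∧ ball (f^[n i] x) r ⊆ f^[n i] '' U i ∧ distortionOn (f^[n i]) (U i) ≤ K

/-- A non-immediately postcritical point: there is a backward orbit through it that is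
dense in the Julia set and avoids the critical points. -/
def NonImmPostCrit (f : RSphere → RSphere) (x : RSphere) : Prop :=
  ∃ b : ℕ → RSphere, b 0 = x ∧ (∀ n, f (b (n + 1)) = b n) ∧
    juliaSet f ⊆ closure (Set.range b) ∧ ∀ n, b n ∉ critSet f

/-- `f` is exceptional: there is a finite nonempty set `Σ_f` with `f⁻¹(Σ_f) \ Crit = Σ_f`. -/
def IsExceptional (f : RSphere → RSphere) : Prop :=
  ∃ S : Set RSphere, S.Finite ∧ S.Nonempty ∧ f ⁻¹' S \ critSet f = S

/-- The largest exceptional set `Σ` of `f`. -/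
def maxExceptional (f : RSphere → RSphere) : Set RSphere :=
  ⋃₀ {S : Set RSphere | S.Finite ∧ S.Nonempty ∧ f ⁻¹' S \ critSet f = S}

/-- `0` not being exceptional, or having exceptional set away from the Julia set. -/
def GoodExc (f : RSphere → RSphere) : Prop :=
  ¬ IsExceptional f ∨ maxExceptional f ∩ juliaSet f = ∅

/-- A parabolic periodic point at a finite point `z`: a periodic point whose multiplier
is a root of unity. -/
def IsParabolicFix (g : RSphere → RSphere) (z : ℂ) : Prop :=
  ∃ m : ℕ, 0 < m ∧ g^[m] (RSphere.ofC z) = RSphere.ofC z ∧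
    ∃ lam : ℂ, (∃ k : ℕ, 0 < k ∧ lam ^ k = 1) ∧
      HasDerivAt (fun w => RSphere.toC (g^[m] (RSphere.ofC w))) lam z

/-- A parabolic periodic point of `f` (at a finite point, or at `∞` read in the chart `1/z`). -/
def IsParabolic (f : RSphere → RSphere) (x : RSphere) : Prop :=
  (∃ z : ℂ, x = RSphere.ofC z ∧ IsParabolicFix f z) ∨
  (x = RSphere.infty ∧ IsParabolicFix (fun y => RSphere.inv (f (RSphere.inv y))) 0)

/-- A recurrent point. -/
def IsRecurrentPt (f : RSphere → RSphere) (x : RSphere) : Prop :=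
  ∃ n : ℕ → ℕ, StrictMono n ∧ Tendsto (fun i => f^[n i] x) atTop (𝓝 x)

/-! ### Graph directed systems and expanding Cantor repellers -/

/-- A graph directed system (GDS) satisfying the strong separation condition with
respect to the map `g`. -/
structure GDS (g : RSphere → RSphere) where
  /-- number of vertices -/
  n : ℕ
  npos : 0 < n
  /-- the open domains -/
  U : Fin n → Set RSphere
  /-- the admissible edges -/
  edge : Fin n → Fin n → Prop
  /-- the inverse branches -/
  br : Fin n → Fin n → RSphere → RSphere
  isOpen : ∀ k, IsOpen (U k)
  isConnected : ∀ k, IsConnected (U k)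
  disjClosure : ∀ k l, k ≠ l → closure (U k) ∩ closure (U l) = ∅
  mapsTo : ∀ k l, edge k l → Set.MapsTo (br k l) (closure (U l)) (U k)
  isBranch : ∀ k l, edge k l → ∀ x ∈ closure (U l), g (br k l x) = x
  bddDistortion : ∃ C : ℝ, ∀ k l, edge k l → distortionOn (br k l) (closure (U l)) ≤ C

/-- The cylinder sets of depth `m` of a GDS. -/
def gdsCyl {g : RSphere → RSphere} (G : GDS g) : ℕ → Set RSphere
  | 0 => ⋃ k, G.U k
  | m + 1 => ⋃ (k : Fin G.n) (l : Fin G.n) (_ : G.edge k l),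
      G.br k l '' (gdsCyl G m ∩ G.U l)

/-- The limit set of a GDS. -/
def gdsLimit {g : RSphere → RSphere} (G : GDS g) : Set RSphere := ⋂ m, gdsCyl G m

/-- An expanding Cantor repeller (ECR) for `g`: a uniformly expanding repeller which is
the limit set of a GDS satisfying the strong separation condition, with `g(Λ) = Λ`. -/
def IsECR (g : RSphere → RSphere) (Λ : Set RSphere) : Prop :=
  ExpandingOn g Λ ∧ IsRepeller g Λ ∧ ∃ G : GDS g, gdsLimit G = Λ

/-- A Cantor set: compact, perfect and totally disconnected. -/
def IsCantorSet (s : Set RSphere) : Prop :=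
  IsCompact s ∧ Perfect s ∧ IsTotallyDisconnected s

/-! ### Entropy, equilibrium states and dimensions -/

/-- The entropy of a countable partition (given by the fibers of `p`). -/
def partEntropy {ι : Type} [Countable ι] (μ : Measure RSphere) (p : RSphere → ι) : ℝ :=
  ∑' i : ι, Real.negMulLog (μ (p ⁻¹' {i})).toReal

/-- Measure-theoretic (Kolmogorov–Sinai) entropy of `T` with respect to `μ`:
supremum over finite measurable partitions of the exponential growth rate of the
entropies of the dynamical refinements. -/
def entropyOf (T : RSphere → RSphere) (μ : Measure RSphere) : ℝ :=
  ⨆ p : {p : RSphere → ℕ // Measurable p ∧ (Set.range p).Finite},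
    ⨅ n : {n : ℕ // 0 < n},
      partEntropy μ (fun x => fun k : Fin n.1 => p.1 (T^[(k : ℕ)] x)) / (n.1 : ℝ)

/-- An equilibrium state for the potential `φ` with respect to `g` restricted to `Λ`. -/
def IsEquilibrium (g : RSphere → RSphere) (Λ : Set RSphere) (φ : RSphere → ℝ)
    (μ : Measure RSphere) : Prop :=
  IsProbabilityMeasure μ ∧ μ Λᶜ = 0 ∧ MeasurePreserving g μ μ ∧
    entropyOf g μ + ∫ x, φ x ∂μ = pressureOn g Λ φ

/-- The Hausdorff dimension of a measure: the infimum of the Hausdorff dimensions of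
sets of full measure. -/
def dimHMeasure (μ : Measure RSphere) : ℝ≥0∞ :=
  ⨅ (s : Set RSphere) (_ : μ sᶜ = 0), dimH s

/-- The minimal number of `ε`-balls needed to cover `s`. -/
def coverNum (s : Set RSphere) (ε : ℝ) : ℕ :=
  sInf {n : ℕ | ∃ t : Finset RSphere, t.card = n ∧ s ⊆ ⋃ x ∈ t, ball x ε}

/-- The upper box-counting dimension. -/
def upperBoxDim (s : Set RSphere) : ℝ :=
  limsup (fun n : ℕ => Real.log (coverNum s (1 / n)) / Real.log n) atTop

/-- The packing dimension, via countable covers and upper box dimensions. -/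
def dimP (s : Set RSphere) : ℝ≥0∞ :=
  ⨅ c : {c : ℕ → Set RSphere // s ⊆ ⋃ n, c n},
    ⨆ n : ℕ, ENNReal.ofReal (upperBoxDim (c.1 n))

/-- The connected component of `y` in `g⁻¹(B)`: the pull-back of `B` along the inverse
branch of `g` sending (the image of) `y` to `y`. -/
def invBranchSet (g : RSphere → RSphere) (B : Set RSphere) (y : RSphere) : Set RSphere :=
  connectedComponentIn (g ⁻¹' B) y

end

/-!
Let `S n` be the Birkhoff sums of `log |f'|` along an orbit in the Julia set. For every `ε > 0` they
satisfy `S n ≥ -ε * n - A` with `A` uniform on the Julia set: otherwise compactness yields a point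
with `S j ≤ -ε * j` for all `j`, near which all iterates are 1-Lipschitz, a point of the Fatou set.
Hence no `q < 0` lies between the two exponents, and for `q > 0` there are infinitely many good
times `n`, at which `S n / n` is close to `q` and
`∑ k < n, exp (S k - S n) ≤ (1 - exp (-q / 2))⁻¹`. If `q` is the upper exponent these are the record
times of `S k - q / 2 * k`; otherwise they are times at which `S` crosses a line of slope slightly
larger than `q`.

At a good time the Bowen ball around `x` with radii `4 * δ * exp (S k - S n)` has radii of small
total size, so `f^[n]` is injective on it with distortion at most `2`. By expansion, the pull-back
of the `δ`-ball stays in the closed Bowen ball of half the radii, so `f^[n]` maps it properly, hence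
bijectively, onto the `δ`-ball, which is connected because a chordal ball of radius at most `√2` is.
-/

/-! ### Conformal maps between metric spaces -/

section Conformal

variable {X Y Z : Type*} [MetricSpace X] [MetricSpace Y] [MetricSpace Z]

/-- The map `g` is conformal on `U` with logarithmic scale `φ`: it is open at the points of `U` and
multiplies distances in `U` by `exp φ`, up to a factor `exp (± C * dist)`. For a
holomorphic map without critical points, `φ` is `log |g'|`. Openness is local at each point of `U`,
so it does not require `U` to be open. -/
structure HasLogScaleOn (g : X → Y) (φ : X → ℝ) (C : ℝ) (U : Set X) : Prop where
  nonneg : 0 ≤ C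
  nhds_le : ∀ u ∈ U, 𝓝 (g u) ≤ map g (𝓝 u)
  le_dist : ∀ u ∈ U, ∀ v ∈ U, Real.exp (φ u - C * dist u v) * dist u v ≤ dist (g u) (g v)
  dist_le : ∀ u ∈ U, ∀ v ∈ U, dist (g u) (g v) ≤ Real.exp (φ u + C * dist u v) * dist u v

/-- The map `g` is conformal near `x`, with logarithmic scale `φ`. -/
def HasLogScaleAt (g : X → Y) (φ : X → ℝ) (x : X) : Prop :=
  ∃ U ∈ 𝓝 x, ∃ C, HasLogScaleOn g φ C U

variable {g g' : X → Y} {h : Y → Z} {φ φ' : X → ℝ} {ψ : Y → ℝ} {C C' D b m : ℝ} {U U' : Set X}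
  {V : Set Y} {u v x : X}

namespace HasLogScaleOn

lemma mono (hg : HasLogScaleOn g φ C U) (hC : C ≤ C') (hU : U' ⊆ U) : HasLogScaleOn g φ C' U' where
  nonneg := hg.nonneg.trans hC
  nhds_le u hu := hg.nhds_le u (hU hu)
  le_dist u hu v hv := le_trans (by gcongr) (hg.le_dist u (hU hu) v (hU hv))
  dist_le u hu v hv := (hg.dist_le u (hU hu) v (hU hv)).trans (by gcongr)

lemma congr_scale (hg : HasLogScaleOn g φ C U) (h : EqOn φ' φ U) : HasLogScaleOn g φ' C U where
  nonneg := hg.nonneg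
  nhds_le := hg.nhds_le
  le_dist u hu := h hu ▸ hg.le_dist u hu
  dist_le u hu := h hu ▸ hg.dist_le u hu

lemma congr (hg : HasLogScaleOn g φ C U) (h : ∀ u ∈ U, g' =ᶠ[𝓝 u] g) : HasLogScaleOn g' φ C U where
  nonneg := hg.nonneg
  nhds_le u hu := by
    rw [map_congr (h u hu), (h u hu).eq_of_nhds]
    exact hg.nhds_le u hu
  le_dist u hu v hv := by
    rw [(h u hu).eq_of_nhds, (h v hv).eq_of_nhds]
    exact hg.le_dist u hu v hv
  dist_le u hu v hv := by
    rw [(h u hu).eq_of_nhds, (h v hv).eq_of_nhds]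
    exact hg.dist_le u hu v hv

lemma sub_le (hg : HasLogScaleOn g φ C U) (hu : u ∈ U) (hv : v ∈ U) :
    φ u - φ v ≤ 2 * C * dist u v := by
  rcases eq_or_ne u v with rfl | hne
  · simp
  have h : Real.exp (φ u - C * dist u v) * dist u v ≤
      Real.exp (φ v + C * dist u v) * dist u v := by
    simpa only [dist_comm] using (hg.le_dist u hu v hv).trans
      ((dist_comm _ _).trans_le (hg.dist_le v hv u hu))
  linarith [Real.exp_le_exp.1 (le_of_mul_le_mul_right h (dist_pos.2 hne))]

lemma abs_sub_le (hg : HasLogScaleOn g φ C U) (hu : u ∈ U) (hv : v ∈ U) :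
    |φ u - φ v| ≤ 2 * C * dist u v :=
  abs_sub_le_iff.2 ⟨hg.sub_le hu hv, dist_comm v u ▸ hg.sub_le hv hu⟩

lemma mul_dist_le (hg : HasLogScaleOn g φ C U) (hx : x ∈ U) (hu : u ∈ U ∩ ball x b)
    (hv : v ∈ U ∩ ball x b) : Real.exp (φ x - 4 * C * b) * dist u v ≤ dist (g u) (g v) := by
  refine le_trans ?_ (hg.le_dist u hu.1 v hv.1)
  have hC := hg.nonneg
  gcongr Real.exp ?_ * _
  nlinarith [hg.sub_le hx hu.1, mem_ball'.1 hu.2, mem_ball.1 hv.2, dist_triangle_right u v x,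
    dist_comm u x]

lemma dist_le_mul (hg : HasLogScaleOn g φ C U) (hx : x ∈ U) (hu : u ∈ U ∩ ball x b)
    (hv : v ∈ U ∩ ball x b) : dist (g u) (g v) ≤ Real.exp (φ x + 4 * C * b) * dist u v := by
  refine (hg.dist_le u hu.1 v hv.1).trans ?_
  have hC := hg.nonneg
  gcongr Real.exp ?_ * _
  nlinarith [hg.sub_le hu.1 hx, mem_ball.1 hu.2, mem_ball.1 hv.2, dist_triangle_right u v x]

lemma lipschitzOnWith (hg : HasLogScaleOn g φ C U) (hx : x ∈ U) :
    LipschitzOnWith (Real.exp (φ x + 4 * C * b)).toNNReal g (U ∩ ball x b) :=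
  .of_dist_le_mul fun u hu v hv => by
    rw [Real.coe_toNNReal _ (Real.exp_pos _).le]
    exact hg.dist_le_mul hx hu hv

lemma comp {M : ℝ≥0} (hh : HasLogScaleOn h ψ D V) (hg : HasLogScaleOn g φ C U)
    (hUV : MapsTo g U V) (hM : LipschitzOnWith M g U) :
    HasLogScaleOn (h ∘ g) (fun u => φ u + ψ (g u)) (D * M + C) U := by
  have hD := hh.nonneg
  have hC := hg.nonneg
  have hDM {u v} (hu : u ∈ U) (hv : v ∈ U) : D * dist (g u) (g v) ≤ D * M * dist u v := by
    rw [mul_assoc]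
    gcongr
    exact hM.dist_le_mul u hu v hv
  refine ⟨by positivity, fun u hu => ?_, fun u hu v hv => ?_, fun u hu v hv => ?_⟩
  · rw [← Filter.map_map]
    exact (hh.nhds_le _ (hUV hu)).trans (map_mono (hg.nhds_le u hu))
  · calc Real.exp (φ u + ψ (g u) - (D * M + C) * dist u v) * dist u v
        ≤ Real.exp ((ψ (g u) - D * dist (g u) (g v)) + (φ u - C * dist u v)) * dist u v := by
          gcongr Real.exp ?_ * _
          linarith [hDM hu hv]
      _ = Real.exp (ψ (g u) - D * dist (g u) (g v)) *
            (Real.exp (φ u - C * dist u v) * dist u v) := by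
          rw [Real.exp_add, mul_assoc]
      _ ≤ Real.exp (ψ (g u) - D * dist (g u) (g v)) * dist (g u) (g v) := by
          gcongr
          exact hg.le_dist u hu v hv
      _ ≤ _ := hh.le_dist _ (hUV hu) _ (hUV hv)
  · calc dist (h (g u)) (h (g v))
        ≤ Real.exp (ψ (g u) + D * dist (g u) (g v)) * dist (g u) (g v) :=
          hh.dist_le _ (hUV hu) _ (hUV hv)
      _ ≤ Real.exp (ψ (g u) + D * dist (g u) (g v)) *
            (Real.exp (φ u + C * dist u v) * dist u v) := by
          gcongr
          exact hg.dist_le u hu v hv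
      _ = Real.exp ((ψ (g u) + D * dist (g u) (g v)) + (φ u + C * dist u v)) * dist u v := by
          rw [Real.exp_add _ (φ u + _), mul_assoc]
      _ ≤ Real.exp (φ u + ψ (g u) + (D * M + C) * dist u v) * dist u v := by
          gcongr Real.exp ?_ * _
          linarith [hDM hu hv]

lemma rightInvOn {k : Y → X} (hg : HasLogScaleOn g φ C U) (hm : 0 < m)
    (hgm : ∀ u ∈ U, ∀ v ∈ U, m * dist u v ≤ dist (g u) (g v)) (hVU : MapsTo k V U)
    (hk : RightInvOn k g V) (hopen : ∀ y ∈ V, 𝓝 (k y) ≤ map k (𝓝 y)) :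
    HasLogScaleOn k (fun y => -φ (k y)) (C / m) V := by
  have hC := hg.nonneg
  have hCm {y z} (hy : y ∈ V) (hz : z ∈ V) : C * dist (k y) (k z) ≤ C / m * dist y z := by
    have := hgm _ (hVU hy) _ (hVU hz)
    rw [hk hy, hk hz] at this
    rw [div_mul_eq_mul_div, le_div_iff₀ hm, mul_assoc]
    gcongr
    linarith
  refine ⟨by positivity, hopen, fun y hy z hz => ?_, fun y hy z hz => ?_⟩
  · have hle := hg.dist_le _ (hVU hy) _ (hVU hz)
    rw [hk hy, hk hz] at hle
    calc Real.exp (-φ (k y) - C / m * dist y z) * dist y z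
        ≤ Real.exp (-(φ (k y) + C * dist (k y) (k z))) *
            (Real.exp (φ (k y) + C * dist (k y) (k z)) * dist (k y) (k z)) := by
          gcongr
          linarith [hCm hy hz]
      _ = dist (k y) (k z) := by rw [← mul_assoc, ← Real.exp_add]; simp
  · have hle := hg.le_dist _ (hVU hy) _ (hVU hz)
    rw [hk hy, hk hz] at hle
    calc dist (k y) (k z)
        = Real.exp (-(φ (k y) - C * dist (k y) (k z))) *
            (Real.exp (φ (k y) - C * dist (k y) (k z)) * dist (k y) (k z)) := by
          rw [← mul_assoc, ← Real.exp_add]; simp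
      _ ≤ Real.exp (-φ (k y) + C / m * dist y z) * dist y z := by
          gcongr
          linarith [hCm hy hz]

end HasLogScaleOn

lemma exp_neg_two_mul_le_one_sub {t : ℝ} (h0 : 0 ≤ t) (h1 : t ≤ 1 / 2) :
    Real.exp (-(2 * t)) ≤ 1 - t := by
  rw [Real.exp_neg, inv_le_comm₀ (Real.exp_pos _) (by linarith)]
  refine le_trans ?_ (Real.add_one_le_exp (2 * t))
  rw [inv_le_iff_one_le_mul₀ (by linarith)]
  nlinarith

lemma hasLogScaleOn_of_abs_sub_le {E : X → ℝ} {L : ℝ} (hm : 0 < m) (hL : 0 ≤ L)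
    (hE : ∀ u ∈ U, m ≤ E u) (hU : ∀ u ∈ U, ∀ v ∈ U, 2 * L * dist u v ≤ m)
    (hopen : ∀ u ∈ U, 𝓝 (g u) ≤ map g (𝓝 u))
    (hd : ∀ u ∈ U, ∀ v ∈ U, |dist (g u) (g v) - E u * dist u v| ≤ L * dist u v ^ 2) :
    HasLogScaleOn g (fun u => Real.log (E u)) (2 * (L / m)) U := by
  have herr : ∀ u ∈ U, ∀ v ∈ U, ∃ t, 2 * t = 2 * (L / m) * dist u v ∧ 0 ≤ t ∧ t ≤ 1 / 2 ∧
      L * dist u v ^ 2 ≤ t * (E u * dist u v) := by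
    intro u hu v hv
    refine ⟨L / m * dist u v, by ring, by positivity, ?_, ?_⟩
    · rw [div_mul_eq_mul_div, div_le_iff₀ hm]
      linarith [hU u hu v hv]
    · calc L * dist u v ^ 2 = L / m * dist u v * (m * dist u v) := by field_simp
        _ ≤ L / m * dist u v * (E u * dist u v) := by gcongr; exact hE u hu
  refine ⟨by positivity, hopen, fun u hu v hv => ?_, fun u hu v hv => ?_⟩ <;>
    obtain ⟨t, ht, h0, h1, htE⟩ := herr u hu v hv <;>
    have hEu := hm.trans_le (hE u hu) <;>
    have hEd : 0 ≤ E u * dist u v := by positivity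
  · rw [← ht, sub_eq_add_neg, Real.exp_add, Real.exp_log hEu]
    nlinarith [mul_le_mul_of_nonneg_right (exp_neg_two_mul_le_one_sub h0 h1) hEd,
      (abs_le.1 (hd u hu v hv)).1]
  · rw [← ht, Real.exp_add, Real.exp_log hEu]
    nlinarith [mul_le_mul_of_nonneg_right (Real.add_one_le_exp (2 * t)) hEd,
      (abs_le.1 (hd u hu v hv)).2, mul_nonneg h0 hEd]

namespace HasLogScaleAt

lemma continuousAt (hg : HasLogScaleAt g φ x) : ContinuousAt g x := by
  obtain ⟨U, hU, C, hg⟩ := hg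
  exact (hg.lipschitzOnWith (mem_of_mem_nhds hU)).continuousOn.continuousAt
    (inter_mem hU (ball_mem_nhds x one_pos))

lemma isBigO_dist (hg : HasLogScaleAt g φ x) :
    (fun u => dist (g u) (g x)) =O[𝓝 x] fun u => dist u x := by
  obtain ⟨U, hU, C, hg⟩ := hg
  have hx := mem_of_mem_nhds hU
  refine .of_bound (Real.exp (φ x + 4 * C * 1)) ?_
  filter_upwards [hU, ball_mem_nhds x one_pos] with u hu hu1
  rw [Real.norm_of_nonneg dist_nonneg, Real.norm_of_nonneg dist_nonneg]
  exact hg.dist_le_mul hx ⟨hu, hu1⟩ ⟨hx, mem_ball_self one_pos⟩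

lemma nhds_le (hg : HasLogScaleAt g φ x) : 𝓝 (g x) ≤ map g (𝓝 x) :=
  let ⟨_, hU, _, hg⟩ := hg
  hg.nhds_le x (mem_of_mem_nhds hU)

lemma eventually (hg : HasLogScaleAt g φ x) : ∀ᶠ u in 𝓝 x, HasLogScaleAt g φ u := by
  obtain ⟨U, hU, C, hg⟩ := hg
  filter_upwards [eventually_mem_nhds_iff.2 hU] with u hu using ⟨U, hu, C, hg⟩

lemma congr_scale (hg : HasLogScaleAt g φ x) (h : φ' =ᶠ[𝓝 x] φ) : HasLogScaleAt g φ' x := by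
  obtain ⟨U, hU, C, hg⟩ := hg
  exact ⟨U ∩ {u | φ' u = φ u}, inter_mem hU h, C,
    (hg.mono le_rfl inter_subset_left).congr_scale fun u hu => hu.2⟩

lemma congr (hg : HasLogScaleAt g φ x) (h : g' =ᶠ[𝓝 x] g) : HasLogScaleAt g' φ x := by
  obtain ⟨U, hU, C, hg⟩ := hg
  exact ⟨U ∩ {u | g' =ᶠ[𝓝 u] g}, inter_mem hU (eventually_eventually_nhds.2 h), C,
    (hg.mono le_rfl inter_subset_left).congr fun u hu => hu.2⟩

lemma comp (hh : HasLogScaleAt h ψ (g x)) (hg : HasLogScaleAt g φ x) :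
    HasLogScaleAt (h ∘ g) (fun u => φ u + ψ (g u)) x := by
  have hcont := hg.continuousAt
  obtain ⟨V, hV, D, hh⟩ := hh
  obtain ⟨U, hU, C, hg⟩ := hg
  exact ⟨U ∩ ball x 1 ∩ g ⁻¹' V,
    inter_mem (inter_mem hU (ball_mem_nhds x one_pos)) (hcont hV), _,
    hh.comp (hg.mono le_rfl fun u hu => hu.1.1) (fun u hu => hu.2)
      ((hg.lipschitzOnWith (mem_of_mem_nhds hU)).mono inter_subset_left)⟩

lemma iterate {f : X → X} {n : ℕ} (hf : ∀ k < n, HasLogScaleAt f φ (f^[k] x)) :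
    HasLogScaleAt f^[n] (birkhoffSum f φ n) x := by
  induction n with
  | zero => exact ⟨univ, univ_mem, 0, le_rfl, fun u _ => by simp, by simp, by simp⟩
  | succ n ih =>
    rw [Function.iterate_succ']
    convert (hf n n.lt_succ_self).comp (ih fun k hk => hf k (hk.trans n.lt_succ_self)) using 1
    exact funext fun u => birkhoffSum_succ f φ n u

lemma leftInverse {k : Y → X} (hg : HasLogScaleAt g φ x) (hgc : Continuous g)
    (hkg : Function.LeftInverse k g) (hgk : ∀ᶠ y in 𝓝 (g x), g (k y) = y)
    (hk : ContinuousAt k (g x)) : HasLogScaleAt k (fun y => -φ (k y)) (g x) := by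
  obtain ⟨U, hU, C, hg⟩ := hg
  have hU' : k ⁻¹' (U ∩ ball x 1) ∈ 𝓝 (g x) :=
    hk (by simpa only [hkg x] using inter_mem hU (ball_mem_nhds x one_pos))
  refine ⟨_, inter_mem hU' hgk, _, (hg.mono le_rfl inter_subset_left).rightInvOn
    (Real.exp_pos _) (fun u hu v hv => hg.mul_dist_le (mem_of_mem_nhds hU) hu hv)
    (fun y hy => hy.1) (fun y hy => hy.2) ?_⟩
  rintro y ⟨-, hy⟩
  calc 𝓝 (k y) = map k (map g (𝓝 (k y))) := by rw [Filter.map_map, hkg.comp_eq_id, map_id]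
    _ ≤ map k (𝓝 (g (k y))) := map_mono hgc.continuousAt
    _ = map k (𝓝 y) := by rw [show g (k y) = y from hy]

lemma continuousAt_scale (hg : HasLogScaleAt g φ x) : ContinuousAt φ x := by
  obtain ⟨U, hU, C, hg⟩ := hg
  obtain ⟨ρ, hρ, hρU⟩ := Metric.mem_nhds_iff.1 hU
  exact continuousAt_of_locally_lipschitz hρ (2 * C)
    fun y hy => hg.abs_sub_le (hρU hy) (mem_of_mem_nhds hU)

lemma tendsto_dist_div (hg : HasLogScaleAt g φ x) :
    Tendsto (fun u => dist (g u) (g x) / dist u x) (𝓝[≠] x) (𝓝 (Real.exp (φ x))) := by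
  obtain ⟨U, hU, C, hg⟩ := hg
  have hlim (s : ℝ) : Tendsto (fun u => Real.exp (φ x + s * dist x u)) (𝓝[≠] x)
      (𝓝 (Real.exp (φ x))) := by
    have : Continuous fun u => Real.exp (φ x + s * dist x u) := by fun_prop
    simpa using (this.tendsto x).mono_left nhdsWithin_le_nhds
  have hx := mem_of_mem_nhds hU
  refine tendsto_of_tendsto_of_tendsto_of_le_of_le' (hlim (-C)) (hlim C) ?_ ?_ <;>
    filter_upwards [nhdsWithin_le_nhds hU, self_mem_nhdsWithin] with u hu hne <;>
    rw [dist_comm u, dist_comm (g u)]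
  · rw [le_div_iff₀ (dist_pos.2 (Ne.symm hne)), neg_mul, ← sub_eq_add_neg]
    exact hg.le_dist x hx u hu
  · rw [div_le_iff₀ (dist_pos.2 (Ne.symm hne))]
    exact hg.dist_le x hx u hu

end HasLogScaleAt

lemma hasLogScaleAt_of_abs_sub_le {E : X → ℝ} {L : ℝ} (hE : ContinuousAt E x) (hEx : 0 < E x)
    (hL : 0 ≤ L) (hU : U ∈ 𝓝 x) (hopen : ∀ u ∈ U, 𝓝 (g u) ≤ map g (𝓝 u))
    (hd : ∀ u ∈ U, ∀ v ∈ U, |dist (g u) (g v) - E u * dist u v| ≤ L * dist u v ^ 2) :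
    HasLogScaleAt g (fun u => Real.log (E u)) x := by
  have hm : 0 < E x / 2 := by positivity
  have hρ : 0 < E x / (8 * (L + 1)) := by positivity
  refine ⟨U ∩ {u | E x / 2 < E u} ∩ ball x (E x / (8 * (L + 1))),
    inter_mem (inter_mem hU (hE.eventually (lt_mem_nhds (half_lt_self hEx))))
      (ball_mem_nhds x hρ), _, hasLogScaleOn_of_abs_sub_le hm hL (fun u hu => hu.1.2.le) ?_
      (fun u hu => hopen u hu.1.1) fun u hu v hv => hd u hu.1.1 v hv.1.1⟩
  rintro u ⟨-, hu⟩ v ⟨-, hv⟩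
  have huv : dist u v ≤ 2 * (E x / (8 * (L + 1))) := by
    linarith [dist_triangle_right u v x, mem_ball.1 hu, mem_ball.1 hv]
  calc 2 * L * dist u v ≤ 2 * (L + 1) * (2 * (E x / (8 * (L + 1)))) := by gcongr; linarith
    _ = E x / 2 := by field_simp; norm_num

lemma hasLogScaleAt_of_isometry {k : X → X} (hk : Isometry k) (hkk : Function.Involutive k)
    (x : X) : HasLogScaleAt k 0 x :=
  let e := (hkk.toPerm k).toHomeomorphOfIsInducing hk.isEmbedding.isInducing
  ⟨univ, univ_mem, 0, le_rfl, fun u _ => (e.map_nhds_eq u).ge,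
    fun u _ v _ => by simp [hk.dist_eq], fun u _ v _ => by simp [hk.dist_eq]⟩

lemma exists_hasLogScaleOn_ball_of_isCompact {J : Set X} (hJ : IsCompact J)
    (hg : ∀ x ∈ J, HasLogScaleAt g φ x) :
    ∃ r > 0, ∃ C, ∀ x ∈ J, HasLogScaleOn g φ C (ball x r) := by
  refine hJ.induction_on (p := fun s => ∃ r > 0, ∃ C, ∀ x ∈ s, HasLogScaleOn g φ C (ball x r))
    ⟨1, one_pos, 0, by simp⟩ ?_ ?_ ?_
  · rintro s t hst ⟨r, hr, C, h⟩
    exact ⟨r, hr, C, fun x hx => h x (hst hx)⟩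
  · rintro s t ⟨r, hr, C, h⟩ ⟨r', hr', C', h'⟩
    exact ⟨min r r', lt_min hr hr', max C C', fun x hx => hx.elim
      (fun hx => (h x hx).mono (le_max_left _ _) (ball_subset_ball (min_le_left _ _)))
      fun hx => (h' x hx).mono (le_max_right _ _) (ball_subset_ball (min_le_right _ _))⟩
  · intro x hx
    obtain ⟨U, hU, C, h⟩ := hg x hx
    obtain ⟨r, hr, hrU⟩ := Metric.mem_nhds_iff.1 hU
    refine ⟨ball x (r / 2), mem_nhdsWithin_of_mem_nhds (ball_mem_nhds x (half_pos hr)),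
      r / 2, half_pos hr, C, fun y hy => h.mono le_rfl ?_⟩
    refine (ball_subset_ball' ?_).trans hrU
    linarith [mem_ball.1 hy]

lemma exists_hasLogScaleOn_ball_mul_le {J : Set X} {c : ℝ} (hJ : IsCompact J)
    (hg : ∀ x ∈ J, HasLogScaleAt g φ x) (hc : 0 < c) :
    ∃ r > 0, ∃ C, C * r ≤ c ∧ ∀ x ∈ J, HasLogScaleOn g φ C (ball x r) := by
  obtain ⟨r, hr, C, h⟩ := exists_hasLogScaleOn_ball_of_isCompact hJ hg
  refine ⟨min r (c / max C 1), by positivity, max C 1, ?_, fun x hx =>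
    (h x hx).mono (le_max_left _ _) (ball_subset_ball (min_le_left _ _))⟩
  exact (le_div_iff₀' (by positivity)).1 (min_le_right _ _)

end Conformal

lemma norm_sub_sub_deriv_mul_le {F : ℂ → ℂ} {s : Set ℂ} {L : ℝ≥0} (hs : Convex ℝ s)
    (hF : ∀ z ∈ s, DifferentiableAt ℂ F z) (hL : LipschitzOnWith L (deriv F) s) {u v : ℂ}
    (hu : u ∈ s) (hv : v ∈ s) : ‖F v - F u - deriv F u * (v - u)‖ ≤ L * dist u v ^ 2 := by
  have hseg : segment ℝ u v ⊆ s := hs.segment_subset hu hv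
  have hderiv : ∀ z ∈ segment ℝ u v, HasDerivWithinAt (fun z => F z - deriv F u * z)
      (deriv F z - deriv F u) (segment ℝ u v) z := by
    intro z hz
    have h := (hF z (hseg hz)).hasDerivAt.sub ((hasDerivAt_id z).const_mul (deriv F u))
    rw [mul_one] at h
    exact h.hasDerivWithinAt
  have hbound : ∀ z ∈ segment ℝ u v, ‖deriv F z - deriv F u‖ ≤ L * dist u v := by
    intro z hz
    rw [← dist_eq_norm]
    refine (hL.dist_le_mul z (hseg hz) u hu).trans ?_
    gcongr
    exact segment_subset_closedBall_left u v hz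
  calc ‖F v - F u - deriv F u * (v - u)‖
      = ‖(F v - deriv F u * v) - (F u - deriv F u * u)‖ := by ring_nf
    _ ≤ L * dist u v * ‖v - u‖ := (convex_segment u v).norm_image_sub_le_of_norm_hasDerivWithin_le
        hderiv hbound (left_mem_segment ℝ u v) (right_mem_segment ℝ u v)
    _ = L * dist u v ^ 2 := by rw [← dist_eq_norm, dist_comm v]; ring

lemma hasLogScaleAt_of_analyticAt {F : ℂ → ℂ} {z₀ : ℂ} (hF : AnalyticAt ℂ F z₀)
    (h0 : deriv F z₀ ≠ 0) : HasLogScaleAt F (fun z => Real.log ‖deriv F z‖) z₀ := by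
  obtain ⟨L, s, hs, hL⟩ := (hF.deriv.contDiffAt (n := 1)).exists_lipschitzOnWith
  obtain ⟨ρ, hρ, hball⟩ := Metric.eventually_nhds_iff_ball.1
    (hF.eventually_analyticAt.and ((hF.deriv.continuousAt.eventually_ne h0).and hs))
  refine hasLogScaleAt_of_abs_sub_le (U := ball z₀ ρ) (L := L) hF.deriv.continuousAt.norm
    (norm_pos_iff.2 h0) L.2 (ball_mem_nhds _ hρ) (fun u hu => ?_) fun u hu v hv => ?_
  · exact ((hball u hu).1.hasStrictDerivAt.map_nhds_eq (hball u hu).2.1).ge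
  · rw [dist_comm (F u), dist_eq_norm, dist_comm u v, dist_eq_norm, ← norm_mul, ← dist_eq_norm v,
      dist_comm v]
    exact (abs_norm_sub_norm_le _ _).trans (norm_sub_sub_deriv_mul_le (convex_ball z₀ ρ)
      (fun z hz => (hball z hz).1.differentiableAt) (hL.mono fun z hz => (hball z hz).2.2) hu hv)

/-! ### Lower bounds for Birkhoff sums -/

section BirkhoffLowerBound

variable {X : Type*} [TopologicalSpace X] {f : X → X} {φ : X → ℝ} {J : Set X}

lemma continuousOn_birkhoffSum (hf : ContinuousOn f J) (hfJ : MapsTo f J J)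
    (hφ : ContinuousOn φ J) (n : ℕ) : ContinuousOn (birkhoffSum f φ n) J :=
  continuousOn_finsetSum _ fun k _ => hφ.comp (hf.iterate hfJ k) (hfJ.iterate k)

lemma exists_bounded_time_lt_birkhoffSum {c : ℝ} (hJ : IsCompact J) (hf : ContinuousOn f J)
    (hfJ : MapsTo f J J) (hφ : ContinuousOn φ J)
    (h : ∀ x ∈ J, ∃ j : ℕ, c * j < birkhoffSum f φ j x) :
    ∃ M : ℕ, ∀ x ∈ J, ∃ j ≤ M, c * j < birkhoffSum f φ j x := by
  refine hJ.induction_on (p := fun s => ∃ M : ℕ, ∀ x ∈ s, ∃ j ≤ M, c * j < birkhoffSum f φ j x)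
    ⟨0, by simp⟩ ?_ ?_ ?_
  · rintro s t hst ⟨M, hM⟩
    exact ⟨M, fun x hx => hM x (hst hx)⟩
  · rintro s t ⟨M, hM⟩ ⟨M', hM'⟩
    refine ⟨max M M', fun x hx => ?_⟩
    rcases hx with hx | hx
    · exact (hM x hx).imp fun j hj => ⟨hj.1.trans (le_max_left _ _), hj.2⟩
    · exact (hM' x hx).imp fun j hj => ⟨hj.1.trans (le_max_right _ _), hj.2⟩
  · intro x hx
    obtain ⟨j, hj⟩ := h x hx
    exact ⟨_, (continuousOn_birkhoffSum hf hfJ hφ j x hx).eventually (lt_mem_nhds hj), j,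
      fun y hy => ⟨j, le_rfl, hy⟩⟩

lemma exists_le_birkhoffSum {ε : ℝ} (hJ : IsCompact J) (hf : ContinuousOn f J)
    (hfJ : MapsTo f J J) (hφ : ContinuousOn φ J) (hε : 0 ≤ ε)
    (h : ∀ x ∈ J, ∃ j : ℕ, -ε * j < birkhoffSum f φ j x) :
    ∃ A : ℝ, ∀ n : ℕ, ∀ x ∈ J, -ε * n - A ≤ birkhoffSum f φ n x := by
  obtain ⟨M, hM⟩ := exists_bounded_time_lt_birkhoffSum hJ hf hfJ hφ h
  obtain ⟨L, hL⟩ := hJ.exists_bound_of_continuousOn hφ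
  refine ⟨M * L, fun n => ?_⟩
  induction n using Nat.strong_induction_on with
  | _ n ih =>
    intro x hx
    rcases le_or_gt n M with hn | hn
    · have hLn : n • -L ≤ birkhoffSum f φ n x := by
        simpa only [Finset.card_range, birkhoffSum] using (Finset.range n).card_nsmul_le_sum _ _
          fun k _ => (abs_le.1 (hL _ (hfJ.iterate k hx))).1
      have hnM : (n : ℝ) * L ≤ M * L := by
        gcongr
        exact (norm_nonneg _).trans (hL x hx)
      have : 0 ≤ ε * n := by positivity
      rw [nsmul_eq_mul] at hLn
      linarith
    · obtain ⟨j, hj, hlt⟩ := hM x hx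
      have hj0 : j ≠ 0 := by
        rintro rfl
        simp at hlt
      obtain ⟨m, rfl⟩ := Nat.exists_eq_add_of_le (hj.trans hn.le)
      have := ih m (by omega) _ (hfJ.iterate j hx)
      rw [birkhoffSum_add]
      push_cast
      linarith

end BirkhoffLowerBound

section Contraction

variable {X : Type*} [MetricSpace X] {f : X → X} {φ : X → ℝ} {y : X} {r ρ C ε : ℝ}

lemma dist_iterate_le_of_birkhoffSum_le (hf : ∀ j, HasLogScaleOn f φ C (ball (f^[j] y) r))
    (hρ : 0 < ρ) (hρr : ρ ≤ r) (hρε : 4 * C * ρ ≤ ε)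
    (hy : ∀ j : ℕ, birkhoffSum f φ j y ≤ -ε * j) (j : ℕ) :
    ∀ u ∈ ball y ρ, ∀ v ∈ ball y ρ,
      dist (f^[j] u) (f^[j] v) ≤ Real.exp (birkhoffSum f φ j y + ε * j) * dist u v := by
  induction j with
  | zero => simp
  | succ j ih =>
    have hmem {u : X} (hu : u ∈ ball y ρ) : f^[j] u ∈ ball (f^[j] y) r ∩ ball (f^[j] y) ρ := by
      have h : dist (f^[j] u) (f^[j] y) < ρ := by
        refine ((ih u hu y (mem_ball_self hρ)).trans ?_).trans_lt hu
        exact mul_le_of_le_one_left dist_nonneg (Real.exp_le_one_iff.2 (by linarith [hy j]))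
      exact ⟨h.trans_le hρr, h⟩
    intro u hu v hv
    rw [Function.iterate_succ_apply', Function.iterate_succ_apply']
    calc dist (f (f^[j] u)) (f (f^[j] v))
        ≤ Real.exp (φ (f^[j] y) + 4 * C * ρ) * dist (f^[j] u) (f^[j] v) :=
          (hf j).dist_le_mul (mem_ball_self (hρ.trans_le hρr)) (hmem hu) (hmem hv)
      _ ≤ Real.exp (φ (f^[j] y) + ε) *
            (Real.exp (birkhoffSum f φ j y + ε * j) * dist u v) := by
          gcongr
          exact ih u hu v hv
      _ = _ := by
          rw [← mul_assoc, ← Real.exp_add, birkhoffSum_succ]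
          push_cast
          ring_nf

lemma exists_lipschitzOnWith_one_iterate (hr : 0 < r) (hε : 0 < ε)
    (hf : ∀ j, HasLogScaleOn f φ C (ball (f^[j] y) r))
    (hy : ∀ j : ℕ, birkhoffSum f φ j y ≤ -ε * j) :
    ∃ ρ > 0, ∀ j, LipschitzOnWith 1 f^[j] (ball y ρ) := by
  have hC := (hf 0).nonneg
  have hρ : 0 < min r (ε / (4 * C + 1)) := lt_min hr (by positivity)
  have hρε : 4 * C * min r (ε / (4 * C + 1)) ≤ ε := by
    have := (le_div_iff₀ (by positivity)).1 (min_le_right r (ε / (4 * C + 1)))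
    linarith
  refine ⟨_, hρ, fun j => .of_dist_le_mul fun u hu v hv => ?_⟩
  refine (dist_iterate_le_of_birkhoffSum_le hf hρ (min_le_left _ _) hρε hy j u hu v hv).trans ?_
  gcongr
  exact Real.exp_le_one_iff.2 (by linarith [hy j])

end Contraction

/-! ### Pull-backs of small balls -/

section ProperComponent

variable {X Y : Type*} [TopologicalSpace X] [TopologicalSpace Y] {g : X → Y} {U K : Set X}
  {B : Set Y} {x : X}

lemma isOpenMap_restrict_of_nhds_le (hU : IsOpen U) (hopen : ∀ u ∈ U, 𝓝 (g u) ≤ map g (𝓝 u)) :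
    IsOpenMap (U.domRestrict g) := by
  refine IsOpenMap.of_nhds_le fun u => (hopen u u.2).trans_eq ?_
  rw [← hU.isOpenEmbedding_subtypeVal.map_nhds_eq u, Filter.map_map]
  rfl

lemma image_inter_preimage_eq_of_isPreconnected [CompactSpace X] [T2Space Y] (hg : Continuous g)
    (hU : IsOpen U) (hopen : ∀ u ∈ U, 𝓝 (g u) ≤ map g (𝓝 u)) (hB : IsOpen B)
    (hBc : IsPreconnected B) (hK : IsClosed K) (hKU : K ⊆ U) (hUK : U ∩ g ⁻¹' B ⊆ K) (hx : x ∈ U)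
    (hxB : g x ∈ B) : g '' (U ∩ g ⁻¹' B) = B := by
  refine Subset.antisymm (image_subset_iff.2 inter_subset_right)
    (hBc.subset_of_closure_inter_subset ?_ ⟨g x, hxB, mem_image_of_mem g ⟨hx, hxB⟩⟩ ?_)
  · rw [image_inter_preimage, ← range_domRestrict]
    exact (isOpenMap_restrict_of_nhds_le hU hopen).isOpen_range.inter hB
  · rintro _ ⟨hy, hyB⟩
    obtain ⟨u, huK, rfl⟩ :=
      closure_minimal (image_mono hUK) (hK.isCompact.image hg).isClosed hy
    exact mem_image_of_mem g ⟨hKU huK, hyB⟩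

lemma isPreconnected_inter_preimage_of_injOn (hU : IsOpen U)
    (hopen : ∀ u ∈ U, 𝓝 (g u) ≤ map g (𝓝 u)) (hinj : InjOn g U) (hBc : IsPreconnected B)
    (himage : g '' (U ∩ g ⁻¹' B) = B) : IsPreconnected (U ∩ g ⁻¹' B) := by
  rw [← Subtype.image_preimage_coe]
  refine (hBc.preimage_of_isOpenMap (injOn_iff_injective.1 hinj)
    (isOpenMap_restrict_of_nhds_le hU hopen) ?_).image _ continuous_subtype_val.continuousOn
  rw [range_domRestrict, ← himage]
  exact image_mono inter_subset_left

lemma connectedComponentIn_preimage_eq_inter (hg : Continuous g) (hU : IsOpen U) (hB : IsOpen B)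
    (hK : IsClosed K) (hKU : K ⊆ U) (hUK : U ∩ g ⁻¹' B ⊆ K) (hW : IsPreconnected (U ∩ g ⁻¹' B))
    (hx : x ∈ U) (hxB : g x ∈ B) : connectedComponentIn (g ⁻¹' B) x = U ∩ g ⁻¹' B := by
  have hxW : x ∈ U ∩ g ⁻¹' B := ⟨hx, hxB⟩
  refine Subset.antisymm (isPreconnected_connectedComponentIn.subset_of_closure_inter_subset
    (hU.inter (hB.preimage hg)) ⟨x, mem_connectedComponentIn hxB, hxW⟩ ?_)
    (hW.subset_connectedComponentIn hxW inter_subset_right)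
  rintro u ⟨huW, huC⟩
  exact ⟨hKU (closure_minimal hUK hK huW), connectedComponentIn_subset _ _ huC⟩

end ProperComponent

section BowenBall

variable {X : Type*} [MetricSpace X] {f : X → X} {φ : X → ℝ} {C δ : ℝ} {n k : ℕ} {b : ℕ → ℝ}
  {x u v : X}

/-- The Bowen ball of order `n` around `x`, with a radius `b k` depending on the time `k`: the
points whose orbit follows that of `x` up to time `n`. -/
def bowenBall (f : X → X) (x : X) (n : ℕ) (b : ℕ → ℝ) : Set X :=
  {u | ∀ k < n, f^[k] u ∈ ball (f^[k] x) (b k)}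

lemma isOpen_bowenBall (hf : Continuous f) : IsOpen (bowenBall f x n b) := by
  have : bowenBall f x n b = ⋂ k ∈ {k | k < n}, f^[k] ⁻¹' ball (f^[k] x) (b k) := by
    ext u
    simp only [bowenBall, mem_ofPred_eq, mem_iInter, mem_preimage]
  rw [this]
  exact (finite_lt_nat n).isOpen_biInter fun k _ => isOpen_ball.preimage (hf.iterate k)

lemma hasLogScaleAt_iterate_of_mem_bowenBall
    (hf : ∀ k < n, HasLogScaleOn f φ C (ball (f^[k] x) (b k))) (hu : u ∈ bowenBall f x n b) :
    HasLogScaleAt f^[n] (birkhoffSum f φ n) u :=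
  .iterate fun k hk => ⟨_, isOpen_ball.mem_nhds (hu k hk), C, hf k hk⟩

lemma dist_iterate_le_of_mem_bowenBall
    (hf : ∀ k < n, HasLogScaleOn f φ C (ball (f^[k] x) (b k))) (hu : u ∈ bowenBall f x n b)
    (hv : v ∈ bowenBall f x n b) (hk : k ≤ n) :
    dist (f^[k] u) (f^[k] v) ≤
      Real.exp (4 * C * ∑ i ∈ Finset.Ico k n, b i +
        (birkhoffSum f φ k x - birkhoffSum f φ n x)) * dist (f^[n] u) (f^[n] v) := by
  induction hk using Nat.decreasingInduction with
  | self => simp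
  | of_succ k hk ih =>
    have hx : f^[k] x ∈ ball (f^[k] x) (b k) :=
      mem_ball_self (dist_nonneg.trans_lt (mem_ball.1 (hu k hk)))
    have hstep := (hf k hk).mul_dist_le hx ⟨hu k hk, hu k hk⟩ ⟨hv k hk, hv k hk⟩
    rw [← Function.iterate_succ_apply' f, ← Function.iterate_succ_apply' f] at hstep
    refine le_of_mul_le_mul_left (hstep.trans (ih.trans_eq ?_)) (Real.exp_pos _)
    rw [← mul_assoc, ← Real.exp_add, Finset.sum_eq_sum_Ico_succ_bot hk, birkhoffSum_succ]
    ring_nf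

lemma birkhoffSum_sub_le_of_mem_bowenBall
    (hf : ∀ k < n, HasLogScaleOn f φ C (ball (f^[k] x) (b k))) (hu : u ∈ bowenBall f x n b)
    (hv : v ∈ bowenBall f x n b) :
    birkhoffSum f φ n u - birkhoffSum f φ n v ≤ 4 * C * ∑ k ∈ Finset.range n, b k := by
  rw [birkhoffSum, birkhoffSum, ← Finset.sum_sub_distrib, Finset.mul_sum]
  refine Finset.sum_le_sum fun k hk => ?_
  have hk := Finset.mem_range.1 hk
  have hC := (hf k hk).nonneg
  calc φ (f^[k] u) - φ (f^[k] v) ≤ 2 * C * dist (f^[k] u) (f^[k] v) :=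
        (hf k hk).sub_le (hu k hk) (hv k hk)
    _ ≤ 2 * C * (b k + b k) := by
        gcongr
        exact (dist_triangle_right _ _ (f^[k] x)).trans (add_le_add (hu k hk).le (hv k hk).le)
    _ = 4 * C * b k := by ring

lemma dist_iterate_le_two_mul_of_mem_bowenBall
    (hf : ∀ k < n, HasLogScaleOn f φ C (ball (f^[k] x) (b k)))
    (hC : 4 * C * ∑ k ∈ Finset.range n, b k ≤ Real.log 2) (hu : u ∈ bowenBall f x n b)
    (hv : v ∈ bowenBall f x n b) (hk : k < n) :
    dist (f^[k] u) (f^[k] v) ≤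
      2 * Real.exp (birkhoffSum f φ k x - birkhoffSum f φ n x) * dist (f^[n] u) (f^[n] v) := by
  have hC0 := (hf k hk).nonneg
  have hsum : ∑ i ∈ Finset.Ico k n, b i ≤ ∑ i ∈ Finset.range n, b i := by
    rw [Finset.range_eq_Ico]
    refine Finset.sum_le_sum_of_subset_of_nonneg (Finset.Ico_subset_Ico_left k.zero_le)
      fun i hi _ => dist_nonneg.trans (mem_ball.1 (hu i (Finset.mem_Ico.1 hi).2)).le
  refine (dist_iterate_le_of_mem_bowenBall hf hu hv hk.le).trans ?_
  rw [Real.exp_add]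
  gcongr
  rw [← Real.le_log_iff_exp_le two_pos]
  exact (mul_le_mul_of_nonneg_left hsum (by positivity)).trans hC

lemma injOn_iterate_bowenBall (hf : ∀ k < n, HasLogScaleOn f φ C (ball (f^[k] x) (b k))) :
    InjOn f^[n] (bowenBall f x n b) := by
  intro u hu v hv huv
  have h := dist_iterate_le_of_mem_bowenBall hf hu hv n.zero_le
  rw [huv, dist_self, mul_zero] at h
  exact dist_le_zero.1 h

lemma dist_iterate_le_half_of_mem_bowenBall
    (hf : ∀ k < n, HasLogScaleOn f φ C (ball (f^[k] x) (b k)))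
    (hC : 4 * C * ∑ k ∈ Finset.range n, b k ≤ Real.log 2)
    (hb : ∀ k < n, 4 * δ * Real.exp (birkhoffSum f φ k x - birkhoffSum f φ n x) ≤ b k)
    (hu : u ∈ bowenBall f x n b) (huδ : f^[n] u ∈ ball (f^[n] x) δ) (hk : k < n) :
    f^[k] u ∈ closedBall (f^[k] x) (b k / 2) := by
  have hx : x ∈ bowenBall f x n b := fun i hi =>
    mem_ball_self (dist_nonneg.trans_lt (mem_ball.1 (hu i hi)))
  calc dist (f^[k] u) (f^[k] x)
      ≤ 2 * Real.exp (birkhoffSum f φ k x - birkhoffSum f φ n x) * dist (f^[n] u) (f^[n] x) :=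
        dist_iterate_le_two_mul_of_mem_bowenBall hf hC hu hx hk
    _ ≤ 2 * Real.exp (birkhoffSum f φ k x - birkhoffSum f φ n x) * δ := by
        gcongr
        exact huδ.le
    _ ≤ b k / 2 := by linarith [hb k hk]

/-- Expansion along the orbit keeps the pull-back inside the closed Bowen ball of half the radii,
so `f^[n]` is proper from the Bowen ball to the `δ`-ball. -/
lemma univalent_pullback [CompactSpace X] (hfc : Continuous f)
    (hf : ∀ k < n, HasLogScaleOn f φ C (ball (f^[k] x) (b k)))
    (hC : 4 * C * ∑ k ∈ Finset.range n, b k ≤ Real.log 2) (hδ : 0 < δ)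
    (hb : ∀ k < n, 4 * δ * Real.exp (birkhoffSum f φ k x - birkhoffSum f φ n x) ≤ b k)
    (hball : IsPreconnected (ball (f^[n] x) δ)) :
    f^[n] '' (bowenBall f x n b ∩ f^[n] ⁻¹' ball (f^[n] x) δ) = ball (f^[n] x) δ ∧
      connectedComponentIn (f^[n] ⁻¹' ball (f^[n] x) δ) x =
        bowenBall f x n b ∩ f^[n] ⁻¹' ball (f^[n] x) δ := by
  have hb0 : ∀ k < n, 0 < b k := fun k hk => lt_of_lt_of_le (by positivity) (hb k hk)
  have hx : x ∈ bowenBall f x n b := fun k hk => mem_ball_self (hb0 k hk)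
  have hU : IsOpen (bowenBall f x n b) := isOpen_bowenBall hfc
  have hopen : ∀ u ∈ bowenBall f x n b, 𝓝 (f^[n] u) ≤ map f^[n] (𝓝 u) := fun u hu =>
    (hasLogScaleAt_iterate_of_mem_bowenBall hf hu).nhds_le
  let K : Set X := ⋂ k ∈ {k | k < n}, f^[k] ⁻¹' closedBall (f^[k] x) (b k / 2)
  have hK : IsClosed K :=
    isClosed_biInter fun k _ => isClosed_closedBall.preimage (hfc.iterate k)
  have hKU : K ⊆ bowenBall f x n b := fun u hu k hk =>
    closedBall_subset_ball (half_lt_self (hb0 k hk)) (mem_iInter₂.1 hu k hk)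
  have hUK : bowenBall f x n b ∩ f^[n] ⁻¹' ball (f^[n] x) δ ⊆ K := fun u hu =>
    mem_iInter₂.2 fun k hk => dist_iterate_le_half_of_mem_bowenBall hf hC hb hu.1 hu.2 hk
  have himage := image_inter_preimage_eq_of_isPreconnected (hfc.iterate n) hU hopen isOpen_ball
    hball hK hKU hUK hx (mem_ball_self hδ)
  exact ⟨himage, connectedComponentIn_preimage_eq_inter (hfc.iterate n) hU isOpen_ball hK hKU hUK
    (isPreconnected_inter_preimage_of_injOn hU hopen (injOn_iterate_bowenBall hf) hball himage)
    hx (mem_ball_self hδ)⟩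

end BowenBall

/-! ### Good times for real sequences -/

section GoodTimes

variable {a : ℕ → ℝ} {c q q₁ q₂ A L ε η : ℝ} {m n : ℕ}

lemma frequently_lt_mul_of_liminf_lt
    (h : liminf (fun n : ℕ => ((a n / n : ℝ) : EReal)) atTop < q) :
    ∃ᶠ n : ℕ in atTop, a n < q * n := by
  refine ((frequently_lt_of_liminf_lt (by isBoundedDefault) h).and_eventually
    (eventually_gt_atTop 0)).mono fun n hn => ?_
  exact (div_lt_iff₀ (Nat.cast_pos.2 hn.2)).1 (EReal.coe_lt_coe_iff.1 hn.1)

lemma frequently_mul_lt_of_lt_limsup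
    (h : q < limsup (fun n : ℕ => ((a n / n : ℝ) : EReal)) atTop) :
    ∃ᶠ n : ℕ in atTop, q * n < a n := by
  refine ((frequently_lt_of_lt_limsup (by isBoundedDefault) h).and_eventually
    (eventually_gt_atTop 0)).mono fun n hn => ?_
  exact (lt_div_iff₀ (Nat.cast_pos.2 hn.2)).1 (EReal.coe_lt_coe_iff.1 hn.1)

lemma eventually_lt_mul_of_limsup_lt
    (h : limsup (fun n : ℕ => ((a n / n : ℝ) : EReal)) atTop < q) :
    ∀ᶠ n : ℕ in atTop, a n < q * n := by
  filter_upwards [eventually_lt_of_limsup_lt h, eventually_gt_atTop 0] with n hn hn0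
  exact (div_lt_iff₀ (Nat.cast_pos.2 hn0)).1 (EReal.coe_lt_coe_iff.1 hn)

lemma eventually_lt_mul_natCast (hq : 0 < q) (A : ℝ) : ∀ᶠ n : ℕ in atTop, A < q * n :=
  (tendsto_natCast_atTop_atTop.const_mul_atTop hq).eventually_gt_atTop A

lemma eventually_mul_exp_sub_mul_le_one (hε : 0 < ε) (A : ℝ) :
    ∀ᶠ n : ℕ in atTop, n * Real.exp (A - ε * n) ≤ 1 := by
  have h := ((Real.tendsto_pow_mul_exp_neg_atTop_nhds_zero 1).comp
    (tendsto_natCast_atTop_atTop.const_mul_atTop hε)).const_mul (Real.exp A / ε)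
  rw [mul_zero] at h
  filter_upwards [h.eventually_le_const one_pos] with n hn
  refine le_of_eq_of_le ?_ hn
  rw [sub_eq_add_neg, Real.exp_add, Function.comp_apply]
  field_simp

lemma nonneg_of_liminf_div_le (ha : ∀ ε > 0, ∃ A : ℝ, ∀ n : ℕ, -ε * n - A ≤ a n)
    (hq : liminf (fun n : ℕ => ((a n / n : ℝ) : EReal)) atTop ≤ q) : 0 ≤ q := by
  by_contra! hneg
  obtain ⟨A, hA⟩ := ha (-q / 4) (by linarith)
  obtain ⟨n, hn, hnA⟩ := ((frequently_lt_mul_of_liminf_lt (q := q / 2) (hq.trans_lt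
    (EReal.coe_lt_coe_iff.2 (by linarith)))).and_eventually
    (eventually_lt_mul_natCast (q := -q / 4) (by linarith) A)).exists
  linarith [hA n]

lemma sum_Ico_exp_sub_le (hc : 0 < c)
    (h : ∀ k, m ≤ k → k < n → c * (n - k) ≤ a n - a k) :
    ∑ k ∈ Finset.Ico m n, Real.exp (a k - a n) ≤ Real.exp (-c) / (1 - Real.exp (-c)) := by
  calc ∑ k ∈ Finset.Ico m n, Real.exp (a k - a n)
      ≤ ∑ k ∈ Finset.Ico m n, Real.exp (-c) ^ (n - k) := by
        refine Finset.sum_le_sum fun k hk => ?_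
        obtain ⟨hmk, hkn⟩ := Finset.mem_Ico.1 hk
        rw [← Real.exp_nat_mul, Nat.cast_sub hkn.le]
        exact Real.exp_le_exp.2 (by linarith [h k hmk hkn])
    _ = ∑ j ∈ Finset.Ico 1 (n + 1 - m), Real.exp (-c) ^ j := by
        rw [Finset.sum_Ico_reflect _ _ n.le_succ, Nat.add_sub_cancel_left]
    _ ≤ Real.exp (-c) ^ 1 / (1 - Real.exp (-c)) :=
        geom_sum_Ico_le_of_lt_one (Real.exp_pos _).le (Real.exp_lt_one_iff.2 (by linarith))
    _ = _ := by rw [pow_one]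

lemma sum_range_exp_sub_le (hc : 0 < c) (h : ∀ k < n, c * (n - k) ≤ a n - a k) :
    ∑ k ∈ Finset.range n, Real.exp (a k - a n) ≤ (1 - Real.exp (-c))⁻¹ := by
  have hc1 : Real.exp (-c) < 1 := Real.exp_lt_one_iff.2 (neg_lt_zero.2 hc)
  rw [Finset.range_eq_Ico]
  refine (sum_Ico_exp_sub_le hc fun k _ hk => h k hk).trans ?_
  rw [div_eq_mul_inv]
  exact mul_le_of_le_one_left (inv_nonneg.2 (sub_nonneg.2 hc1.le)) hc1.le

lemma frequently_record_time (hcq : c < q) (hup : ∃ᶠ n : ℕ in atTop, q * n < a n) :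
    ∃ᶠ n : ℕ in atTop, q * n < a n ∧ ∀ k < n, c * (n - k) ≤ a n - a k := by
  refine frequently_atTop.2 fun N => ?_
  obtain ⟨i, -, hi⟩ := Finset.exists_max_image (Finset.range (N + 1)) (fun k => a k - c * k)
    ⟨0, by simp⟩
  obtain ⟨n, hn, hni⟩ := (hup.and_eventually
    (eventually_lt_mul_natCast (sub_pos.2 hcq) (a i - c * i))).exists
  obtain ⟨t, htn, ht⟩ := Finset.exists_max_image (Finset.range (n + 1)) (fun k => a k - c * k)
    ⟨0, by simp⟩
  have hnt := ht n (by simp)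
  have htn : t ≤ n := Nat.lt_succ_iff.1 (Finset.mem_range.1 htn)
  have hNt : N < t := by
    by_contra! htN
    linarith [hi t (Finset.mem_range.2 (Nat.lt_succ_of_le htN))]
  refine ⟨t, hNt.le, ?_, fun k hk => ?_⟩
  · have : (q - c) * t ≤ (q - c) * n := by gcongr
    linarith
  · linarith [ht k (Finset.mem_range.2 (by omega))]

lemma exists_first_time_ge (hm : a m < q * m) (hex : ∃ᶠ n : ℕ in atTop, q * n < a n) :
    ∃ n > m, q * n ≤ a n ∧ ∀ k, m ≤ k → k < n → a k ≤ q * k := by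
  classical
  have hex : ∃ n, m < n ∧ q * n ≤ a n := by
    obtain ⟨n, hn, hmn⟩ := (hex.and_eventually (eventually_gt_atTop m)).exists
    exact ⟨n, hmn, hn.le⟩
  refine ⟨Nat.find hex, (Nat.find_spec hex).1, (Nat.find_spec hex).2, fun k hmk hk => ?_⟩
  rcases hmk.eq_or_lt with rfl | hmk
  · exact hm.le
  · exact (not_le.1 fun h => Nat.find_min hex hk ⟨hmk, h⟩).le

/-- Up to time `m`, the sequence `a` is far below `a n`, since it cannot decrease much before it
reaches the small value `a m`; from `m` to `n`, it stays below the line of slope `q₂`. -/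
lemma sum_range_exp_sub_le_of_crossing (hc : 0 < c) (hcq : c ≤ q₂) (hmn : m ≤ n)
    (hA : ∀ k ≤ m, -ε * (m - k) - A ≤ a m - a k) (hε : 0 ≤ ε)
    (hmε : m * Real.exp (A - ε * m) ≤ 1) (hm : a m ≤ (q₂ - 2 * ε) * m) (hn : q₂ * n ≤ a n)
    (hk : ∀ k, m ≤ k → k < n → a k ≤ q₂ * k) :
    ∑ k ∈ Finset.range n, Real.exp (a k - a n) ≤ (1 - Real.exp (-c))⁻¹ := by
  have hmn' : (m : ℝ) ≤ n := by exact_mod_cast hmn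
  have hearly : ∑ k ∈ Finset.range m, Real.exp (a k - a n) ≤ 1 := by
    refine le_trans ?_ hmε
    conv_rhs => rw [← nsmul_eq_mul, ← Finset.card_range m]
    refine Finset.sum_le_card_nsmul _ _ _ fun k hkm => ?_
    rw [Finset.card_range, Real.exp_le_exp]
    have := hA k (Finset.mem_range.1 hkm).le
    have : q₂ * m ≤ q₂ * n := mul_le_mul_of_nonneg_left hmn' (hc.le.trans hcq)
    have : 0 ≤ ε * k := by positivity
    linarith
  have hlate := sum_Ico_exp_sub_le hc (a := a) (m := m) (n := n) fun k hmk hkn => by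
    have : (k : ℝ) ≤ n := by exact_mod_cast hkn.le
    have : c * (n - k) ≤ q₂ * (n - k) := by gcongr
    linarith [hk k hmk hkn]
  have hc1 : 1 - Real.exp (-c) ≠ 0 := by
    have := Real.exp_lt_one_iff.2 (neg_lt_zero.2 hc)
    linarith
  calc ∑ k ∈ Finset.range n, Real.exp (a k - a n)
      = ∑ k ∈ Finset.range m, Real.exp (a k - a n) + ∑ k ∈ Finset.Ico m n, Real.exp (a k - a n) :=
        (Finset.sum_range_add_sum_Ico _ hmn).symm
    _ ≤ 1 + Real.exp (-c) / (1 - Real.exp (-c)) := add_le_add hearly hlate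
    _ = (1 - Real.exp (-c))⁻¹ := by field_simp; ring

lemma frequently_crossing_time (hc : 0 < c) (hcq : c ≤ q₂) (hq : q₁ < q₂) (hη : 0 < η)
    (haL : ∀ n, a (n + 1) ≤ a n + L)
    (hA : ∀ ε > 0, ∃ A : ℝ, ∀ k n : ℕ, k ≤ n → -ε * (n - k) - A ≤ a n - a k)
    (hlow : ∃ᶠ n : ℕ in atTop, a n < q₁ * n) (hup : ∃ᶠ n : ℕ in atTop, q₂ * n < a n) :
    ∃ᶠ n : ℕ in atTop, q₂ * n ≤ a n ∧ a n < (q₂ + η) * n ∧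
      ∑ k ∈ Finset.range n, Real.exp (a k - a n) ≤ (1 - Real.exp (-c))⁻¹ := by
  refine frequently_atTop.2 fun N => ?_
  have hε : 0 < (q₂ - q₁) / 2 := by linarith
  obtain ⟨A, hA⟩ := hA _ hε
  obtain ⟨m, hm, hmA, hmL, hNm⟩ := (hlow.and_eventually
    ((eventually_mul_exp_sub_mul_le_one hε A).and
      ((eventually_lt_mul_natCast hη L).and (eventually_ge_atTop N)))).exists
  obtain ⟨n, hmn, hn, hk⟩ := exists_first_time_ge (hm.trans_le (by gcongr)) hup
  refine ⟨n, hNm.trans hmn.le, hn, ?_, sum_range_exp_sub_le_of_crossing hc hcq hmn.le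
    (fun k hkm => hA k m hkm) hε.le hmA (hm.le.trans_eq (by ring)) hn hk⟩
  obtain ⟨j, rfl⟩ := Nat.exists_eq_succ_of_ne_zero (Nat.ne_zero_of_lt hmn)
  have hmn' : (m : ℝ) ≤ (j + 1 : ℕ) := by exact_mod_cast hmn.le
  calc a (j + 1) ≤ a j + L := haL j
    _ ≤ q₂ * j + L := by gcongr; exact hk j (by omega) (by omega)
    _ < q₂ * j + η * m := by gcongr
    _ ≤ q₂ * (j + 1 : ℕ) + η * (j + 1 : ℕ) := by
        have := hc.trans_le hcq
        gcongr
        linarith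
    _ = _ := by ring

lemma abs_div_natCast_sub_lt (hn : n ≠ 0) (h₁ : (q - η) * n < a n) (h₂ : a n < (q + η) * n) :
    |a n / n - q| < η := by
  have hn0 : (0 : ℝ) < n := Nat.cast_pos.2 hn.bot_lt
  rw [abs_sub_lt_iff, sub_lt_iff_lt_add', sub_lt_comm]
  exact ⟨(div_lt_iff₀ hn0).2 h₂, (lt_div_iff₀ hn0).2 h₁⟩

lemma frequently_good_time (hq : 0 < q) (haL : ∀ n, a (n + 1) ≤ a n + L)
    (hA : ∀ ε > 0, ∃ A : ℝ, ∀ k n : ℕ, k ≤ n → -ε * (n - k) - A ≤ a n - a k)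
    (hlow : liminf (fun n : ℕ => ((a n / n : ℝ) : EReal)) atTop ≤ q)
    (hup : (q : EReal) ≤ limsup (fun n : ℕ => ((a n / n : ℝ) : EReal)) atTop) (hη : 0 < η) :
    ∃ᶠ n : ℕ in atTop, |a n / n - q| < η ∧
      ∑ k ∈ Finset.range n, Real.exp (a k - a n) ≤ (1 - Real.exp (-(q / 2)))⁻¹ := by
  have hc := half_pos hq
  rcases hup.eq_or_lt with heq | hlt
  · obtain ⟨q', hq', hq'q⟩ := exists_between (max_lt (half_lt_self hq) (sub_lt_self q hη))
    obtain ⟨hcq', hηq'⟩ := max_lt_iff.1 hq'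
    have hrec := frequently_record_time hcq' (frequently_mul_lt_of_lt_limsup
      ((EReal.coe_lt_coe_iff.2 hq'q).trans_eq heq))
    have hlim : ∀ᶠ n : ℕ in atTop, a n < (q + η) * n := eventually_lt_mul_of_limsup_lt
      (heq.symm.trans_lt (EReal.coe_lt_coe_iff.2 (lt_add_of_pos_right q hη)))
    refine (hrec.and_eventually (hlim.and (eventually_ne_atTop 0))).mono ?_
    rintro n ⟨⟨hn, hk⟩, hlt, hn0⟩
    refine ⟨abs_div_natCast_sub_lt hn0 (lt_of_le_of_lt (by gcongr) hn) hlt, ?_⟩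
    exact sum_range_exp_sub_le hc hk
  · obtain ⟨b, hqb, hb⟩ := EReal.lt_iff_exists_real_btwn.1 hlt
    obtain ⟨q₂, hqq₂, hq₂⟩ :=
      exists_between (lt_min (EReal.coe_lt_coe_iff.1 hqb) (lt_add_of_pos_right q hη))
    obtain ⟨hq₂b, hq₂η⟩ := lt_min_iff.1 hq₂
    obtain ⟨q₁, hqq₁, hq₁₂⟩ := exists_between hqq₂
    have hcross := frequently_crossing_time hc ((half_lt_self hq).trans hqq₂).le hq₁₂
      (sub_pos.2 hq₂η) haL hA
      (frequently_lt_mul_of_liminf_lt (hlow.trans_lt (EReal.coe_lt_coe_iff.2 hqq₁)))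
      (frequently_mul_lt_of_lt_limsup ((EReal.coe_lt_coe_iff.2 hq₂b).trans hb))
    rw [add_sub_cancel] at hcross
    refine (hcross.and_eventually (eventually_ne_atTop 0)).mono ?_
    rintro n ⟨⟨hn, hlt, hsum⟩, hn0⟩
    have : (0 : ℝ) < n := Nat.cast_pos.2 hn0.bot_lt
    exact ⟨abs_div_natCast_sub_lt hn0 (lt_of_lt_of_le (by gcongr; linarith) hn) hlt, hsum⟩

end GoodTimes

/-! ### The chordal metric -/

section SphericalCap

variable {E : Type*} [NormedAddCommGroup E] [InnerProductSpace ℝ E] {v y : E} {δ : ℝ}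

lemma convex_setOf_mul_norm_lt_inner {c : ℝ} (hc : 0 ≤ c) (y : E) :
    Convex ℝ {w : E | c * ‖w‖ < inner ℝ y w} := by
  have h := (((convexOn_univ_norm (E := E)).smul hc).sub
    ((innerₗ E y).concaveOn convex_univ)).convex_lt 0
  simpa using h

lemma dist_lt_iff_lt_inner (hv : ‖v‖ = 1) (hy : ‖y‖ = 1) (hδ : 0 < δ) :
    dist v y < δ ↔ 1 - δ ^ 2 / 2 < inner ℝ y v := by
  have hdist : dist v y ^ 2 = 2 - 2 * inner ℝ y v := by
    rw [dist_eq_norm, norm_sub_sq_real, hv, hy, real_inner_comm]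
    ring
  rw [← pow_lt_pow_iff_left₀ dist_nonneg hδ.le two_ne_zero, hdist]
  constructor <;> intro h <;> linarith

lemma ball_inter_sphere_eq_image (hy : ‖y‖ = 1) (hδ : 0 < δ) :
    ball y δ ∩ sphere 0 1 =
      (fun w => ‖w‖⁻¹ • w) '' {w | (1 - δ ^ 2 / 2) * ‖w‖ < inner ℝ y w} := by
  ext v
  constructor
  · rintro ⟨hv, hv1⟩
    rw [mem_sphere_zero_iff_norm] at hv1
    exact ⟨v, by simpa [hv1] using (dist_lt_iff_lt_inner hv1 hy hδ).1 hv, by simp [hv1]⟩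
  · rintro ⟨w, hw, rfl⟩
    have hw0 : w ≠ 0 := by
      rintro rfl
      simp at hw
    have hn : ‖‖w‖⁻¹ • w‖ = 1 := norm_smul_inv_norm (𝕜 := ℝ) hw0
    refine ⟨?_, mem_sphere_zero_iff_norm.2 hn⟩
    rw [mem_ball, dist_lt_iff_lt_inner hn hy hδ, real_inner_smul_right, inv_mul_eq_div,
      lt_div_iff₀ (norm_pos_iff.2 hw0)]
    exact hw

lemma isPreconnected_ball_inter_sphere (hy : ‖y‖ = 1) (hδ : δ ≤ √2) :
    IsPreconnected (ball y δ ∩ sphere 0 1) := by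
  rcases le_or_gt δ 0 with h0 | h0
  · rw [ball_eq_empty.2 h0, empty_inter]
    exact isPreconnected_empty
  have hc : 0 ≤ 1 - δ ^ 2 / 2 := by linarith [(Real.le_sqrt h0.le zero_le_two).1 hδ]
  rw [ball_inter_sphere_eq_image hy h0]
  refine (convex_setOf_mul_norm_lt_inner hc y).isPreconnected.image _ ?_
  refine ContinuousOn.smul (continuousOn_id.norm.inv₀ fun w hw hw0 => ?_) continuousOn_id
  simp_all

end SphericalCap

namespace RSphere

variable {x : RSphere} {z : ℂ} {δ : ℝ}

lemma isometry_embed : Isometry embed := Isometry.of_dist_eq fun _ _ => rfl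

lemma dist_sq_eq (x y : RSphere) : dist x y ^ 2 =
    dist (embed x).fst (embed y).fst ^ 2 + dist (embed x).snd (embed y).snd ^ 2 := by
  rw [← isometry_embed.dist_eq, WithLp.prod_dist_eq_of_L2, Real.sq_sqrt (by positivity)]

lemma embed_ofC_fst (z : ℂ) : (embed (ofC z)).fst = ((2 / (‖z‖ ^ 2 + 1) : ℝ)) • z := rfl

lemma embed_ofC_snd (z : ℂ) : (embed (ofC z)).snd = (‖z‖ ^ 2 - 1) / (‖z‖ ^ 2 + 1) := rfl

lemma embed_infty_fst : (embed infty).fst = 0 := rfl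

lemma embed_infty_snd : (embed infty).snd = 1 := rfl

lemma exists_ofC_or_eq_infty (x : RSphere) : (∃ z, x = ofC z) ∨ x = infty := by
  rcases x with ⟨_ | z⟩
  · exact Or.inr rfl
  · exact Or.inl ⟨z, rfl⟩

lemma toC_ofC (z : ℂ) : toC (ofC z) = z := rfl

lemma ofC_ne_infty (z : ℂ) : ofC z ≠ infty := by simp [ofC, infty]

lemma ofC_toC (hx : x ≠ infty) : ofC (toC x) = x := by
  rcases exists_ofC_or_eq_infty x with ⟨z, rfl⟩ | h
  · rfl
  · exact absurd h hx

lemma inv_infty : inv infty = ofC 0 := rfl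

lemma inv_ofC_zero : inv (ofC 0) = infty := by simp [inv, ofC, elim]

lemma inv_ofC (hz : z ≠ 0) : inv (ofC z) = ofC z⁻¹ := by simp [inv, ofC, elim, hz]

lemma involutive_inv : Function.Involutive inv := by
  intro x
  rcases exists_ofC_or_eq_infty x with ⟨z, rfl⟩ | rfl
  · rcases eq_or_ne z 0 with rfl | hz
    · rw [inv_ofC_zero, inv_infty]
    · rw [inv_ofC hz, inv_ofC (inv_ne_zero hz), inv_inv]
  · rw [inv_infty, inv_ofC_zero]

lemma norm_embed (x : RSphere) : ‖embed x‖ = 1 := by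
  rw [← sq_eq_sq₀ (norm_nonneg _) zero_le_one, WithLp.prod_norm_sq_eq_of_L2]
  rcases exists_ofC_or_eq_infty x with ⟨z, rfl⟩ | rfl
  · rw [embed_ofC_fst, embed_ofC_snd, norm_smul, Real.norm_eq_abs, Real.norm_eq_abs, mul_pow,
      sq_abs, sq_abs]
    field_simp
    ring
  · rw [embed_infty_fst, embed_infty_snd]
    norm_num

lemma embed_unembed {v : WithLp 2 (ℂ × ℝ)} (hv : ‖v‖ = 1) : embed (unembed v) = v := by
  have h : ‖v.fst‖ ^ 2 = (1 - v.snd) * (1 + v.snd) := by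
    have := WithLp.prod_norm_sq_eq_of_L2 v
    rw [hv, Real.norm_eq_abs v.snd, sq_abs] at this
    linarith
  by_cases h1 : v.snd = 1
  · have h0 : v.fst = 0 := by simpa [h1] using h
    rw [show unembed v = infty from if_pos h1]
    exact WithLp.ofLp_injective 2 (Prod.ext h0.symm h1.symm)
  · have hs : 1 - v.snd ≠ 0 := sub_ne_zero.2 (Ne.symm h1)
    have hn : ‖(1 - v.snd)⁻¹ • v.fst‖ ^ 2 = (1 + v.snd) / (1 - v.snd) := by
      rw [norm_smul, mul_pow, Real.norm_eq_abs, sq_abs, inv_pow, h]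
      field_simp
    have hd : (1 + v.snd) / (1 - v.snd) + 1 = 2 / (1 - v.snd) := by
      field_simp
      ring
    rw [show unembed v = ofC ((1 - v.snd)⁻¹ • v.fst) from if_neg h1]
    refine WithLp.ofLp_injective 2 (Prod.ext ?_ ?_)
    · change (embed (ofC _)).fst = v.fst
      rw [embed_ofC_fst, hn, hd, smul_smul, div_div_cancel₀ two_ne_zero, mul_inv_cancel₀ hs,
        one_smul]
    · change (embed (ofC _)).snd = v.snd
      rw [embed_ofC_snd, hn, hd]
      field_simp
      ring

lemma range_embed : range embed = sphere 0 1 := by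
  ext v
  rw [mem_sphere_zero_iff_norm]
  exact ⟨fun ⟨x, hx⟩ => hx ▸ norm_embed x, fun hv => ⟨unembed v, embed_unembed hv⟩⟩

instance : CompactSpace RSphere := by
  refine ⟨?_⟩
  rw [isometry_embed.isEmbedding.isCompact_iff, image_univ, range_embed]
  exact isCompact_sphere _ _

lemma isPreconnected_ball (x : RSphere) (hδ : δ ≤ √2) : IsPreconnected (ball x δ) := by
  rw [← isometry_embed.isEmbedding.isInducing.isPreconnected_image, ← isometry_embed.preimage_ball,
    image_preimage_eq_inter_range, range_embed]
  exact isPreconnected_ball_inter_sphere (norm_embed x) hδ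

lemma embed_inv_fst (x : RSphere) : (embed (inv x)).fst = starRingEnd ℂ (embed x).fst := by
  rcases exists_ofC_or_eq_infty x with ⟨z, rfl⟩ | rfl
  · rcases eq_or_ne z 0 with rfl | hz
    · simp [inv_ofC_zero, embed_infty_fst, embed_ofC_fst]
    · have := norm_pos_iff.2 hz
      rw [inv_ofC hz, embed_ofC_fst, embed_ofC_fst, Complex.inv_def, Complex.real_smul,
        Complex.real_smul, map_mul, Complex.conj_ofReal, mul_left_comm, ← Complex.ofReal_mul,
        mul_comm, Complex.normSq_eq_norm_sq, norm_mul, Complex.norm_real, RCLike.norm_conj,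
        Real.norm_of_nonneg (by positivity)]
      congr 2
      field_simp
      ring
  · simp [inv_infty, embed_infty_fst, embed_ofC_fst]

lemma embed_inv_snd (x : RSphere) : (embed (inv x)).snd = -(embed x).snd := by
  rcases exists_ofC_or_eq_infty x with ⟨z, rfl⟩ | rfl
  · rcases eq_or_ne z 0 with rfl | hz
    · simp [inv_ofC_zero, embed_infty_snd, embed_ofC_snd]
    · have := norm_pos_iff.2 hz
      rw [inv_ofC hz, embed_ofC_snd, embed_ofC_snd, norm_inv]
      field_simp
      ring
  · simp [inv_infty, embed_infty_snd, embed_ofC_snd]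

lemma isometry_inv : Isometry inv := by
  refine Isometry.of_dist_eq fun x y => (pow_left_inj₀ dist_nonneg dist_nonneg two_ne_zero).1 ?_
  simp only [dist_sq_eq, embed_inv_fst, embed_inv_snd, dist_neg_neg, Complex.dist_conj_conj]

lemma hasLogScaleAt_inv (x : RSphere) : HasLogScaleAt inv 0 x :=
  hasLogScaleAt_of_isometry isometry_inv involutive_inv x

lemma map_inv_nhdsNE (x : RSphere) : map inv (𝓝[≠] x) = 𝓝[≠] (inv x) :=
  ((involutive_inv.toPerm inv).toHomeomorphOfIsInducing
    isometry_inv.isEmbedding.isInducing).map_punctured_nhds_eq x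

lemma dist_ofC_ofC (z w : ℂ) :
    dist (ofC z) (ofC w) = 2 * dist z w / (√(1 + ‖z‖ ^ 2) * √(1 + ‖w‖ ^ 2)) := by
  refine (pow_left_inj₀ dist_nonneg (by positivity) two_ne_zero).1 ?_
  rw [dist_sq_eq, embed_ofC_fst, embed_ofC_snd, embed_ofC_fst, embed_ofC_snd, div_pow, mul_pow,
    mul_pow, Real.sq_sqrt (by positivity), Real.sq_sqrt (by positivity), Complex.dist_eq,
    Complex.dist_eq, Real.dist_eq, sq_abs]
  have : 0 < 1 + (z.re * z.re + z.im * z.im) := by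
    linarith [mul_self_nonneg z.re, mul_self_nonneg z.im]
  have : 0 < 1 + (w.re * w.re + w.im * w.im) := by
    linarith [mul_self_nonneg w.re, mul_self_nonneg w.im]
  simp only [← Complex.normSq_eq_norm_sq, Complex.normSq_apply, Complex.sub_re, Complex.sub_im,
    Complex.real_smul, Complex.mul_re, Complex.mul_im, Complex.ofReal_re, Complex.ofReal_im,
    zero_mul, sub_zero, add_zero]
  rw [add_comm _ (1 : ℝ), add_comm _ (1 : ℝ)]
  field_simp
  ring

lemma one_le_sqrt_one_add_sq (z : ℂ) : 1 ≤ √(1 + ‖z‖ ^ 2) :=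
  Real.one_le_sqrt.2 (le_add_of_nonneg_right (by positivity))

lemma dist_ofC_ofC_le (z w : ℂ) : dist (ofC z) (ofC w) ≤ 2 * dist z w := by
  rw [dist_ofC_ofC]
  exact div_le_self (by positivity)
    (one_le_mul_of_one_le_of_one_le (one_le_sqrt_one_add_sq z) (one_le_sqrt_one_add_sq w))

lemma continuous_ofC : Continuous ofC :=
  (LipschitzWith.of_dist_le_mul (K := 2) dist_ofC_ofC_le).continuous

lemma one_sub_embed_ofC_snd (z : ℂ) : 1 - (embed (ofC z)).snd = 2 / (‖z‖ ^ 2 + 1) := by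
  rw [embed_ofC_snd]
  field_simp
  ring

lemma toC_eq_smul (x : RSphere) : toC x = (1 - (embed x).snd)⁻¹ • (embed x).fst := by
  rcases exists_ofC_or_eq_infty x with ⟨z, rfl⟩ | rfl
  · rw [toC_ofC, one_sub_embed_ofC_snd, embed_ofC_fst, smul_smul, inv_mul_cancel₀ (by positivity),
      one_smul]
  · rw [embed_infty_fst, smul_zero]
    rfl

lemma continuousAt_toC (z : ℂ) : ContinuousAt toC (ofC z) := by
  rw [funext toC_eq_smul]
  have hfst : Continuous fun x => (embed x).fst :=
    (WithLp.continuous_fst ..).comp isometry_embed.continuous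
  have hsnd : Continuous fun x => (embed x).snd :=
    (WithLp.continuous_snd ..).comp isometry_embed.continuous
  refine ((continuous_const.sub hsnd).continuousAt.inv₀ ?_).smul hfst.continuousAt
  change 1 - (embed (ofC z)).snd ≠ 0
  rw [one_sub_embed_ofC_snd]
  positivity

lemma eventually_ne_infty (z : ℂ) : ∀ᶠ x in 𝓝 (ofC z), x ≠ infty :=
  isOpen_ne.mem_nhds (ofC_ne_infty z)

instance : PerfectSpace RSphere := by
  refine perfectSpace_iff_forall_not_isolated.2 fun x => ?_
  have hfinite (z : ℂ) : (𝓝[≠] (ofC z)).NeBot := by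
    have hne : MapsTo ofC {z}ᶜ {ofC z}ᶜ := fun w hw h => hw (congrArg toC h)
    exact (continuous_ofC.continuousAt.continuousWithinAt.tendsto_nhdsWithin hne).neBot
  rcases exists_ofC_or_eq_infty x with ⟨z, rfl⟩ | rfl
  · exact hfinite z
  · rw [← inv_ofC_zero, ← map_inv_nhdsNE]
    exact (hfinite 0).map inv

lemma abs_sqrt_one_add_sq_sub_le (z w : ℂ) :
    |√(1 + ‖z‖ ^ 2) - √(1 + ‖w‖ ^ 2)| ≤ dist z w := by
  have hnorm (a : ℂ) : √(1 + ‖a‖ ^ 2) = ‖WithLp.toLp 2 ((1 : ℝ), a)‖ := by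
    rw [WithLp.prod_norm_eq_of_L2]
    simp
  rw [hnorm, hnorm]
  refine (abs_norm_sub_norm_le _ _).trans_eq ?_
  rw [WithLp.prod_norm_eq_of_L2]
  simp [dist_eq_norm]

lemma nhds_ofC_le (z : ℂ) : 𝓝 (ofC z) ≤ map ofC (𝓝 z) := by
  have h : (ofC ∘ toC) =ᶠ[𝓝 (ofC z)] id := (eventually_ne_infty z).mono fun x hx => ofC_toC hx
  calc 𝓝 (ofC z) = map ofC (map toC (𝓝 (ofC z))) := by rw [Filter.map_map, map_congr h, map_id]
    _ ≤ map ofC (𝓝 z) := map_mono (continuousAt_toC z)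

lemma abs_dist_ofC_sub_le (z w : ℂ) :
    |dist (ofC z) (ofC w) - 2 / √(1 + ‖z‖ ^ 2) ^ 2 * dist z w| ≤ 2 * dist z w ^ 2 := by
  have hz := one_le_sqrt_one_add_sq z
  have hw := one_le_sqrt_one_add_sq w
  have hzw := abs_sqrt_one_add_sq_sub_le z w
  rw [dist_ofC_ofC]
  set A := √(1 + ‖z‖ ^ 2)
  set B := √(1 + ‖w‖ ^ 2)
  have hAB : 1 ≤ A ^ 2 * B := one_le_mul_of_one_le_of_one_le (one_le_pow₀ hz) hw
  calc |2 * dist z w / (A * B) - 2 / A ^ 2 * dist z w|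
      = |2 * dist z w * (A - B) / (A ^ 2 * B)| := by congr 1; field_simp
    _ = 2 * dist z w * |A - B| / (A ^ 2 * B) := by
        rw [abs_div, abs_mul, abs_of_nonneg (by positivity : 0 ≤ 2 * dist z w),
          abs_of_pos (by positivity : 0 < A ^ 2 * B)]
    _ ≤ 2 * dist z w * |A - B| := div_le_self (by positivity) hAB
    _ ≤ 2 * dist z w * dist z w := by gcongr
    _ = 2 * dist z w ^ 2 := by ring

lemma hasLogScaleAt_ofC (z : ℂ) :
    HasLogScaleAt ofC (fun z => Real.log (2 / √(1 + ‖z‖ ^ 2) ^ 2)) z :=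
  have h : Continuous fun z : ℂ => 2 / √(1 + ‖z‖ ^ 2) ^ 2 :=
    continuous_const.div (by fun_prop) fun z => by positivity
  hasLogScaleAt_of_abs_sub_le h.continuousAt (by positivity) zero_le_two univ_mem
    (fun u _ => nhds_ofC_le u) fun u _ v _ => abs_dist_ofC_sub_le u v

lemma exists_hasLogScaleAt_toC (z : ℂ) : ∃ φ, HasLogScaleAt toC φ (ofC z) :=
  ⟨_, (hasLogScaleAt_ofC z).leftInverse continuous_ofC toC_ofC
    ((eventually_ne_infty z).mono fun _ hx => ofC_toC hx) (continuousAt_toC z)⟩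

end RSphere

/-! ### Rational maps away from the critical points -/

/-- `log |g'|`, the logarithm of the spherical derivative. -/
noncomputable def logSphDeriv (g : RSphere → RSphere) (x : RSphere) : ℝ := Real.log (sphDeriv g x)

section SphDeriv

variable {g : RSphere → RSphere} {φ : RSphere → ℝ} {x : RSphere}

lemma HasLogScaleAt.sphDeriv_eq (hg : HasLogScaleAt g φ x) : sphDeriv g x = Real.exp (φ x) :=
  hg.tendsto_dist_div.limsup_eq

lemma HasLogScaleAt.hasLogScaleAt_logSphDeriv (hg : HasLogScaleAt g φ x) :
    HasLogScaleAt g (logSphDeriv g) x :=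
  hg.congr_scale <| hg.eventually.mono fun u hu => by
    rw [logSphDeriv, hu.sphDeriv_eq, Real.log_exp]

lemma sphDeriv_inv_comp (g : RSphere → RSphere) (x : RSphere) :
    sphDeriv (RSphere.inv ∘ g) x = sphDeriv g x := by
  simp only [sphDeriv, Function.comp, RSphere.isometry_inv.dist_eq]

lemma sphDeriv_comp_inv (g : RSphere → RSphere) (x : RSphere) :
    sphDeriv (g ∘ RSphere.inv) x = sphDeriv g (RSphere.inv x) := by
  simp only [sphDeriv, ← RSphere.map_inv_nhdsNE, limsup, Filter.map_map, Function.comp_def,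
    RSphere.isometry_inv.dist_eq]

end SphDeriv

lemma eval_inv_eq_eval_reverse_div {K : Type*} [Field K] (P : Polynomial K) {z : K}
    (hz : z ≠ 0) : P.eval z⁻¹ = P.reverse.eval z / z ^ P.natDegree := by
  let _ : Invertible z⁻¹ := invertibleOfNonzero (inv_ne_zero hz)
  have h := Polynomial.eval₂_reverse_mul_pow (RingHom.id K) z⁻¹ P
  rw [invOf_eq_inv, inv_inv, inv_pow] at h
  rw [div_eq_mul_inv]
  exact h.symm

/-- A continuous self-map of the sphere that is a quotient `P / Q` of nonzero polynomials outside
their zeros. Not asking for coprimality makes this notion stable under the substitution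
`z ↦ 1 / z`. -/
structure IsPolyQuotient (g : RSphere → RSphere) : Prop where
  continuous : Continuous g
  exists_eval : ∃ P Q : Polynomial ℂ, P ≠ 0 ∧ Q ≠ 0 ∧
    ∀ z, P.eval z ≠ 0 → Q.eval z ≠ 0 → g (RSphere.ofC z) = RSphere.ofC (P.eval z / Q.eval z)

lemma IsRationalMap.isPolyQuotient {f : RSphere → RSphere} {p q : Polynomial ℂ}
    (hf : IsRationalMap f p q) (hdeg : 0 < ratDeg p q) : IsPolyQuotient f := by
  refine ⟨hf.continuous, p, q, ?_, ?_, fun z _ hz => hf.eval z hz⟩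
  · rintro rfl
    have := Polynomial.natDegree_eq_zero_of_isUnit (isCoprime_zero_left.1 hf.coprime)
    simp [ratDeg, this] at hdeg
  · rintro rfl
    have := Polynomial.natDegree_eq_zero_of_isUnit (isCoprime_zero_right.1 hf.coprime)
    simp [ratDeg, this] at hdeg

namespace IsPolyQuotient

variable {g : RSphere → RSphere} {x : RSphere} {z₀ : ℂ}

lemma inv_comp (hg : IsPolyQuotient g) : IsPolyQuotient (RSphere.inv ∘ g) := by
  obtain ⟨hc, P, Q, hP, hQ, h⟩ := hg
  refine ⟨RSphere.isometry_inv.continuous.comp hc, Q, P, hQ, hP, fun z hzQ hzP => ?_⟩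
  rw [Function.comp, h z hzP hzQ, RSphere.inv_ofC (div_ne_zero hzP hzQ), inv_div]

lemma comp_inv (hg : IsPolyQuotient g) : IsPolyQuotient (g ∘ RSphere.inv) := by
  obtain ⟨hc, P, Q, hP, hQ, h⟩ := hg
  refine ⟨hc.comp RSphere.isometry_inv.continuous,
    Polynomial.X ^ (Q.natDegree + 1) * P.reverse, Polynomial.X ^ (P.natDegree + 1) * Q.reverse,
    mul_ne_zero (pow_ne_zero _ Polynomial.X_ne_zero) (by simpa using hP),
    mul_ne_zero (pow_ne_zero _ Polynomial.X_ne_zero) (by simpa using hQ), fun z hzP hzQ => ?_⟩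
  simp only [Polynomial.eval_mul, Polynomial.eval_pow, Polynomial.eval_X] at hzP hzQ ⊢
  have hz : z ≠ 0 := by
    rintro rfl
    simp at hzP
  have hPinv := eval_inv_eq_eval_reverse_div P hz
  have hQinv := eval_inv_eq_eval_reverse_div Q hz
  rw [Function.comp, RSphere.inv_ofC hz, h, hPinv, hQinv]
  · congr 1
    field_simp
    ring
  · rw [hPinv]
    exact div_ne_zero (right_ne_zero_of_mul hzP) (pow_ne_zero _ hz)
  · rw [hQinv]
    exact div_ne_zero (right_ne_zero_of_mul hzQ) (pow_ne_zero _ hz)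

/-- The finitely many zeros of `P * Q` are removable singularities, `g` being continuous. -/
lemma analyticAt_toC_comp_ofC (hg : IsPolyQuotient g) (h : g (RSphere.ofC z₀) ≠ RSphere.infty) :
    AnalyticAt ℂ (fun z => RSphere.toC (g (RSphere.ofC z))) z₀ := by
  obtain ⟨hc, P, Q, hP, hQ, hPQ⟩ := hg
  apply Complex.analyticAt_of_differentiable_on_punctured_nhds_of_continuousAt
  · have hfin : {z | (P * Q).IsRoot z}.Finite :=
      Polynomial.finite_setOfPred_isRoot (mul_ne_zero hP hQ)
    have hne {z : ℂ} (hz : ¬ (P * Q).IsRoot z) : P.eval z ≠ 0 ∧ Q.eval z ≠ 0 := by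
      rwa [Polynomial.IsRoot.def, Polynomial.eval_mul, mul_eq_zero, not_or] at hz
    filter_upwards [nhdsNE_le_cofinite z₀ hfin.compl_mem_cofinite] with z hz
    have hloc : (fun w => RSphere.toC (g (RSphere.ofC w))) =ᶠ[𝓝 z]
        fun w => P.eval w / Q.eval w := by
      filter_upwards [hfin.isClosed.isOpen_compl.mem_nhds hz] with w hw
      rw [hPQ w (hne hw).1 (hne hw).2, RSphere.toC_ofC]
    exact (P.differentiableAt.div Q.differentiableAt (hne hz).2).congr_of_eventuallyEq hloc
  · refine ContinuousAt.comp (g := RSphere.toC) ?_ (hc.comp RSphere.continuous_ofC).continuousAt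
    rw [← RSphere.ofC_toC h]
    exact RSphere.continuousAt_toC _

lemma eventuallyEq_ofC_comp_comp_toC (hg : IsPolyQuotient g)
    (h : g (RSphere.ofC z₀) ≠ RSphere.infty) :
    g =ᶠ[𝓝 (RSphere.ofC z₀)]
      RSphere.ofC ∘ (fun z => RSphere.toC (g (RSphere.ofC z))) ∘ RSphere.toC := by
  filter_upwards [RSphere.eventually_ne_infty z₀,
    hg.continuous.continuousAt.eventually (isOpen_ne.mem_nhds h)] with y hy hgy
  rw [Function.comp, Function.comp, RSphere.ofC_toC hy, RSphere.ofC_toC hgy]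

lemma sphDeriv_ofC_eq_zero (hg : IsPolyQuotient g) (h : g (RSphere.ofC z₀) ≠ RSphere.infty)
    (h0 : deriv (fun z => RSphere.toC (g (RSphere.ofC z))) z₀ = 0) :
    sphDeriv g (RSphere.ofC z₀) = 0 := by
  set F : ℂ → ℂ := fun z => RSphere.toC (g (RSphere.ofC z))
  obtain ⟨φ, hφ⟩ := RSphere.exists_hasLogScaleAt_toC z₀
  have hF' : HasDerivAt F 0 z₀ := h0 ▸ (hg.analyticAt_toC_comp_ofC h).differentiableAt.hasDerivAt
  have hder : (fun z => F z - F z₀) =o[𝓝 z₀] fun z => dist z z₀ := by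
    simpa only [smul_zero, sub_zero, dist_eq_norm, Asymptotics.isLittleO_norm_right] using
      hasDerivAt_iff_isLittleO.1 hF'
  have hcomp : (fun y => F (RSphere.toC y) - F z₀) =o[𝓝 (RSphere.ofC z₀)]
      fun y => dist y (RSphere.ofC z₀) :=
    (hder.comp_tendsto (RSphere.continuousAt_toC z₀)).trans_isBigO hφ.isBigO_dist
  have hle : (fun y => dist (g y) (g (RSphere.ofC z₀))) =O[𝓝 (RSphere.ofC z₀)]
      fun y => F (RSphere.toC y) - F z₀ := by
    refine Asymptotics.IsBigO.of_bound 2 ?_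
    filter_upwards [hg.eventuallyEq_ofC_comp_comp_toC h] with y hy
    rw [Real.norm_of_nonneg dist_nonneg, hy, ← RSphere.ofC_toC h, ← dist_eq_norm]
    exact RSphere.dist_ofC_ofC_le _ _
  exact ((hle.trans_isLittleO hcomp).tendsto_div_nhds_zero.mono_left nhdsWithin_le_nhds).limsup_eq

lemma exists_hasLogScaleAt_ofC_of_ne_infty (hg : IsPolyQuotient g)
    (h : g (RSphere.ofC z₀) ≠ RSphere.infty) (hz₀ : sphDeriv g (RSphere.ofC z₀) ≠ 0) :
    ∃ φ, HasLogScaleAt g φ (RSphere.ofC z₀) := by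
  obtain ⟨φ, hφ⟩ := RSphere.exists_hasLogScaleAt_toC z₀
  have hF := hasLogScaleAt_of_analyticAt (hg.analyticAt_toC_comp_ofC h)
    (mt (hg.sphDeriv_ofC_eq_zero h) hz₀)
  exact ⟨_, ((RSphere.hasLogScaleAt_ofC _).comp (HasLogScaleAt.comp hF hφ)).congr
    (hg.eventuallyEq_ofC_comp_comp_toC h)⟩

lemma exists_hasLogScaleAt_ofC (hg : IsPolyQuotient g) (hz₀ : sphDeriv g (RSphere.ofC z₀) ≠ 0) :
    ∃ φ, HasLogScaleAt g φ (RSphere.ofC z₀) := by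
  by_cases h : g (RSphere.ofC z₀) = RSphere.infty
  · have h' : (RSphere.inv ∘ g) (RSphere.ofC z₀) ≠ RSphere.infty := by
      rw [Function.comp, h, RSphere.inv_infty]
      exact RSphere.ofC_ne_infty 0
    obtain ⟨φ, hφ⟩ := hg.inv_comp.exists_hasLogScaleAt_ofC_of_ne_infty h'
      (by rwa [sphDeriv_inv_comp])
    have := (RSphere.hasLogScaleAt_inv _).comp hφ
    rw [← Function.comp_assoc, RSphere.involutive_inv.comp_self, Function.id_comp] at this
    exact ⟨_, this⟩
  · exact hg.exists_hasLogScaleAt_ofC_of_ne_infty h hz₀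

lemma exists_hasLogScaleAt (hg : IsPolyQuotient g) (hx : sphDeriv g x ≠ 0) :
    ∃ φ, HasLogScaleAt g φ x := by
  rcases RSphere.exists_ofC_or_eq_infty x with ⟨z, rfl⟩ | rfl
  · exact hg.exists_hasLogScaleAt_ofC hx
  · have h0 : sphDeriv (g ∘ RSphere.inv) (RSphere.ofC 0) ≠ 0 := by
      rwa [sphDeriv_comp_inv, RSphere.inv_ofC_zero]
    obtain ⟨φ, hφ⟩ := hg.comp_inv.exists_hasLogScaleAt_ofC h0
    have := HasLogScaleAt.comp (x := RSphere.infty) hφ (RSphere.hasLogScaleAt_inv _)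
    rw [Function.comp_assoc, RSphere.involutive_inv.comp_self, Function.comp_id] at this
    exact ⟨_, this⟩

end IsPolyQuotient

lemma IsRationalMap.hasLogScaleAt_logSphDeriv {f : RSphere → RSphere} {p q : Polynomial ℂ}
    (hf : IsRationalMap f p q) (hdeg : 0 < ratDeg p q) {x : RSphere} (hx : x ∉ critSet f) :
    HasLogScaleAt f (logSphDeriv f) x :=
  have ⟨_, hφ⟩ := (hf.isPolyQuotient hdeg).exists_hasLogScaleAt hx
  hφ.hasLogScaleAt_logSphDeriv

/-! ### Birkhoff sums and pull-backs on the Julia set -/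

section JuliaSet

variable {f : RSphere → RSphere} {φ : RSphere → ℝ} {x : RSphere} {r C T δ ε η q : ℝ} {n : ℕ}

lemma isOpen_fatouSet (f : RSphere → RSphere) : IsOpen (fatouSet f) := by
  refine isOpen_iff_mem_nhds.2 fun x ⟨U, hU, hx, h⟩ => ?_
  filter_upwards [hU.mem_nhds hx] with y hy using ⟨U, hU, hy, h⟩

lemma isCompact_juliaSet (f : RSphere → RSphere) : IsCompact (juliaSet f) :=
  (isOpen_fatouSet f).isClosed_compl.isCompact

lemma mapsTo_juliaSet (hfc : Continuous f) : MapsTo f (juliaSet f) (juliaSet f) := by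
  rintro x hx ⟨U, hU, hxU, h⟩
  refine hx ⟨f ⁻¹' U, hU.preimage hfc, hxU, fun y hy V hV => ?_⟩
  have hsucc : ∀ᶠ z in 𝓝[f ⁻¹' U] y, ∀ n, (f^[n] (f y), f^[n] (f z)) ∈ V :=
    (hfc.continuousAt.continuousWithinAt.tendsto_nhdsWithin fun _ hz => hz).eventually
      (h (f y) hy V hV)
  have hzero : ∀ᶠ z in 𝓝[f ⁻¹' U] y, (y, z) ∈ V := nhdsWithin_le_nhds (mem_nhds_left y hV)
  filter_upwards [hsucc, hzero] with z hz hz₀ n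
  cases n with
  | zero => exact hz₀
  | succ n => exact hz n

lemma mem_fatouSet_of_birkhoffSum_le (hr : 0 < r) (hε : 0 < ε)
    (hf : ∀ j, HasLogScaleOn f φ C (ball (f^[j] x) r))
    (hx : ∀ j : ℕ, birkhoffSum f φ j x ≤ -ε * j) : x ∈ fatouSet f := by
  obtain ⟨ρ, hρ, hlip⟩ := exists_lipschitzOnWith_one_iterate hr hε hf hx
  exact ⟨ball x ρ, isOpen_ball, mem_ball_self hρ,
    (LipschitzOnWith.uniformEquicontinuousOn _ 1 hlip).equicontinuousOn⟩

lemma exists_le_birkhoffSum_of_mem_juliaSet (hfc : Continuous f)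
    (hf : ∀ x ∈ juliaSet f, HasLogScaleAt f φ x) (hε : 0 < ε) :
    ∃ A : ℝ, ∀ n : ℕ, ∀ x ∈ juliaSet f, -ε * n - A ≤ birkhoffSum f φ n x := by
  have hJ := mapsTo_juliaSet hfc
  refine exists_le_birkhoffSum (isCompact_juliaSet f) hfc.continuousOn hJ
    (fun x hx => (hf x hx).continuousAt_scale.continuousWithinAt) hε.le fun x hx => ?_
  by_contra! hle
  obtain ⟨r, hr, C, hball⟩ := exists_hasLogScaleOn_ball_of_isCompact (isCompact_juliaSet f) hf
  exact hx (mem_fatouSet_of_birkhoffSum_le hr hε (fun j => hball _ (hJ.iterate j hx)) hle)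

lemma log_sphDeriv_iterate (hf : ∀ k < n, HasLogScaleAt f φ (f^[k] x)) :
    Real.log (sphDeriv f^[n] x) = birkhoffSum f φ n x := by
  rw [(HasLogScaleAt.iterate hf).sphDeriv_eq, Real.log_exp]

lemma nonneg_of_lyapLower_le (hfc : Continuous f) (hf : ∀ x ∈ juliaSet f, HasLogScaleAt f φ x)
    (hx : x ∈ juliaSet f) (hlow : lyapLower f x ≤ q) : 0 ≤ q := by
  have hJ := mapsTo_juliaSet hfc
  simp only [lyapLower, log_sphDeriv_iterate fun k _ => hf _ (hJ.iterate k hx)] at hlow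
  refine nonneg_of_liminf_div_le (fun ε hε => ?_) hlow
  obtain ⟨A, hA⟩ := exists_le_birkhoffSum_of_mem_juliaSet hfc hf hε
  exact ⟨A, fun n => hA n x hx⟩

lemma frequently_good_time_of_mem_juliaSet (hfc : Continuous f)
    (hf : ∀ x ∈ juliaSet f, HasLogScaleAt f φ x) (hx : x ∈ juliaSet f) (hq : 0 < q)
    (hlow : lyapLower f x ≤ q) (hup : (q : EReal) ≤ lyapUpper f x) (hη : 0 < η) :
    ∃ᶠ n : ℕ in atTop, |Real.log (sphDeriv f^[n] x) / n - q| < η ∧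
      ∑ k ∈ Finset.range n, Real.exp (birkhoffSum f φ k x - birkhoffSum f φ n x) ≤
        (1 - Real.exp (-(q / 2)))⁻¹ := by
  have hJ := fun k => (mapsTo_juliaSet hfc).iterate k hx
  have hlog := fun n => log_sphDeriv_iterate (n := n) fun k _ => hf _ (hJ k)
  simp only [lyapLower, lyapUpper, hlog] at hlow hup ⊢
  obtain ⟨L, hL⟩ := (isCompact_juliaSet f).exists_bound_of_continuousOn
    fun y hy => (hf y hy).continuousAt_scale.continuousWithinAt
  refine frequently_good_time (L := L) hq (fun n => ?_) (fun ε hε => ?_) hlow hup hη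
  · rw [birkhoffSum_succ]
    linarith [(abs_le.1 (hL _ (hJ n))).2]
  · obtain ⟨A, hA⟩ := exists_le_birkhoffSum_of_mem_juliaSet hfc hf hε
    refine ⟨A, fun k n hkn => ?_⟩
    obtain ⟨m, rfl⟩ := Nat.exists_eq_add_of_le hkn
    rw [birkhoffSum_add, add_sub_cancel_left, Nat.cast_add, add_sub_cancel_left]
    exact hA m _ (hJ k)

lemma exists_good_times (hfc : Continuous f) (hf : ∀ x ∈ juliaSet f, HasLogScaleAt f φ x)
    (hx : x ∈ juliaSet f) (hq : 0 < q) (hlow : lyapLower f x ≤ q)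
    (hup : (q : EReal) ≤ lyapUpper f x) :
    ∃ nk : ℕ → ℕ, StrictMono nk ∧
      Tendsto (fun k => Real.log (sphDeriv f^[nk k] x) / (nk k : ℝ)) atTop (𝓝 q) ∧
      ∀ k, ∑ i ∈ Finset.range (nk k),
        Real.exp (birkhoffSum f φ i x - birkhoffSum f φ (nk k) x) ≤
          (1 - Real.exp (-(q / 2)))⁻¹ := by
  obtain ⟨nk, hmono, hnk⟩ := extraction_forall_of_frequently fun k : ℕ =>
    frequently_good_time_of_mem_juliaSet hfc hf hx hq hlow hup (Nat.one_div_pos_of_nat (n := k))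
  exact ⟨nk, hmono, tendsto_iff_dist_tendsto_zero.2 <| squeeze_zero (fun _ => dist_nonneg)
    (fun k => (hnk k).1.le) tendsto_one_div_add_atTop_nhds_zero_nat, fun k => (hnk k).2⟩

lemma distortionOn_le_exp {g : RSphere → RSphere} {ψ : RSphere → ℝ} {Z : Set RSphere} {M : ℝ}
    (hg : ∀ u ∈ Z, HasLogScaleAt g ψ u) (hM : ∀ u ∈ Z, ∀ v ∈ Z, ψ u - ψ v ≤ M) :
    distortionOn g Z ≤ Real.exp M := by
  refine Real.sSup_le ?_ (Real.exp_pos M).le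
  rintro _ ⟨u, hu, v, hv, rfl⟩
  rw [(hg u hu).sphDeriv_eq, (hg v hv).sphDeriv_eq, ← Real.exp_sub]
  exact Real.exp_le_exp.2 (hM u hu v hv)

lemma injOn_image_distortionOn_invBranchSet (hfc : Continuous f)
    (hf : ∀ k, HasLogScaleOn f φ C (ball (f^[k] x) r)) (hC : 4 * (C * r) ≤ Real.log 2)
    (hδ : 0 < δ) (hδ2 : δ ≤ √2) (hδT : 4 * δ * T ≤ r)
    (hT : ∑ k ∈ Finset.range n, Real.exp (birkhoffSum f φ k x - birkhoffSum f φ n x) ≤ T) :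
    InjOn f^[n] (invBranchSet f^[n] (ball (f^[n] x) δ) x) ∧
      f^[n] '' invBranchSet f^[n] (ball (f^[n] x) δ) x = ball (f^[n] x) δ ∧
      distortionOn f^[n] (invBranchSet f^[n] (ball (f^[n] x) δ) x) ≤ 2 := by
  let b : ℕ → ℝ := fun k => 4 * δ * Real.exp (birkhoffSum f φ k x - birkhoffSum f φ n x)
  have hsum : ∑ k ∈ Finset.range n, b k ≤ r := by
    rw [← Finset.mul_sum]
    exact (mul_le_mul_of_nonneg_left hT (by positivity)).trans hδT
  have hb : ∀ k < n, HasLogScaleOn f φ C (ball (f^[k] x) (b k)) := fun k hk =>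
    (hf k).mono le_rfl <| ball_subset_ball <| (Finset.single_le_sum (f := b)
      (fun i _ => by positivity) (Finset.mem_range.2 hk)).trans hsum
  have hCb : 4 * C * ∑ k ∈ Finset.range n, b k ≤ Real.log 2 := by
    rw [mul_assoc]
    exact (by gcongr; exact (hf 0).nonneg : _ ≤ 4 * (C * r)).trans hC
  obtain ⟨himage, hbranch⟩ := univalent_pullback hfc hb hCb hδ (fun _ _ => le_rfl)
    (RSphere.isPreconnected_ball _ hδ2)
  rw [invBranchSet, hbranch]
  refine ⟨(injOn_iterate_bowenBall hb).mono inter_subset_left, himage, ?_⟩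
  rw [← Real.exp_log two_pos]
  exact distortionOn_le_exp (fun u hu => hasLogScaleAt_iterate_of_mem_bowenBall hb hu.1)
    fun u hu v hv => (birkhoffSum_sub_le_of_mem_bowenBall hb hu.1 hv.1).trans hCb

end JuliaSet

theorem bounded_distortion_times_general (f : RSphere → RSphere) (hfc : Continuous f)
    (φ : RSphere → ℝ) (hf : ∀ x ∈ juliaSet f, HasLogScaleAt f φ x) :
    ∃ K : ℝ, 0 < K ∧ ∀ qq : ℝ, qq ≠ 0 → ∃ δ : ℝ, 0 < δ ∧
      ∀ x ∈ juliaSet f, lyapLower f x ≤ (qq : EReal) → (qq : EReal) ≤ lyapUpper f x →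
        ∃ nk : ℕ → ℕ, StrictMono nk ∧
          Tendsto (fun k => Real.log (sphDeriv (f^[nk k]) x) / (nk k : ℝ)) atTop (𝓝 qq) ∧
          ∀ k,
            Set.InjOn (f^[nk k]) (invBranchSet (f^[nk k]) (ball (f^[nk k] x) δ) x) ∧
            (f^[nk k]) '' invBranchSet (f^[nk k]) (ball (f^[nk k] x) δ) x
              = ball (f^[nk k] x) δ ∧
            distortionOn (f^[nk k]) (invBranchSet (f^[nk k]) (ball (f^[nk k] x) δ) x) < K := by
  obtain ⟨r, hr, C, hC, hball⟩ := exists_hasLogScaleOn_ball_mul_le (isCompact_juliaSet f) hf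
    (div_pos (Real.log_pos one_lt_two) four_pos)
  refine ⟨3, three_pos, fun qq hqq => ?_⟩
  rcases hqq.lt_or_gt with hneg | hpos
  · exact ⟨1, one_pos, fun x hx hlow _ =>
      absurd (nonneg_of_lyapLower_le hfc hf hx hlow) hneg.not_ge⟩
  have hT : 0 < (1 - Real.exp (-(qq / 2)))⁻¹ :=
    inv_pos.2 (sub_pos.2 (Real.exp_lt_one_iff.2 (neg_neg_of_pos (half_pos hpos))))
  set T := (1 - Real.exp (-(qq / 2)))⁻¹
  obtain ⟨δ, hδ, hδ2, hδT⟩ : ∃ δ > 0, δ ≤ √2 ∧ 4 * δ * T ≤ r :=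
    ⟨min √2 (r / (4 * T)), by positivity, min_le_left _ _, by
      linarith [(le_div_iff₀ (by positivity)).1 (min_le_right √2 (r / (4 * T)))]⟩
  refine ⟨δ, hδ, fun x hx hlow hup => ?_⟩
  obtain ⟨nk, hmono, hlim, hsum⟩ := exists_good_times hfc hf hx hpos hlow hup
  refine ⟨nk, hmono, hlim, fun k => ?_⟩
  obtain ⟨hinj, himage, hdist⟩ := injOn_image_distortionOn_invBranchSet hfc
    (fun j => hball _ ((mapsTo_juliaSet hfc).iterate j hx)) ((le_div_iff₀' four_pos).1 hC)
    hδ hδ2 hδT (hsum k)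
  exact ⟨hinj, himage, hdist.trans_lt (by norm_num)⟩

/-- **Lemma (bounded distortion along good times).**
Assume `J` contains no critical points of `f`. There is `K > 0` (depending only on `f`)
such that for every `q ≠ 0` there is `δ > 0` (depending on `q` but not on the point)
such that for every `x ∈ J` with `χ̄(x) > 0` and `q ∈ [χ̲(x), χ̄(x)]` there is a
sequence `n_k → ∞` with `(1/n_k) log |(f^{n_k})'(x)| → q` such that the inverse branch
of `f^{n_k}` sending `f^{n_k}(x)` to `x` is defined on `B(f^{n_k}(x), δ)` and the
distortion of `f^{n_k}` on the corresponding pull-back is less than `K`. -/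
theorem bounded_distortion_times (f : RSphere → RSphere) (p q : Polynomial ℂ)
    (hf : IsRationalMap f p q) (hdeg : 2 ≤ ratDeg p q)
    (hcrit : juliaSet f ∩ critSet f = ∅) :
    ∃ K : ℝ, 0 < K ∧ ∀ qq : ℝ, qq ≠ 0 → ∃ δ : ℝ, 0 < δ ∧
      ∀ x ∈ juliaSet f, 0 < lyapUpper f x →
        lyapLower f x ≤ (qq : EReal) → (qq : EReal) ≤ lyapUpper f x →
        ∃ nk : ℕ → ℕ, StrictMono nk ∧
          Tendsto (fun k => Real.log (sphDeriv (f^[nk k]) x) / (nk k : ℝ)) atTop (𝓝 qq) ∧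
          ∀ k,
            Set.InjOn (f^[nk k]) (invBranchSet (f^[nk k]) (ball (f^[nk k] x) δ) x) ∧
            (f^[nk k]) '' invBranchSet (f^[nk k]) (ball (f^[nk k] x) δ) x
              = ball (f^[nk k] x) δ ∧
            distortionOn (f^[nk k]) (invBranchSet (f^[nk k]) (ball (f^[nk k] x) δ) x) < K := by
  obtain ⟨K, hK, H⟩ := bounded_distortion_times_general f hf.continuous _ fun _ hx =>
    hf.hasLogScaleAt_logSphDeriv (two_pos.trans_le hdeg) fun hx' => hcrit.subset ⟨hx, hx'⟩
  exact ⟨K, hK, fun qq hqq => (H qq hqq).imp fun δ h => ⟨h.1, fun x hx _ => h.2 x hx⟩⟩
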